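/- arXiv:1704.06195 — 2 statements merged into one kernel-verified Lean document; each statement's English description precedes it below -/
import Mathlib

section
/- Let A ∈ M_n(ℂ) be a positive semidefinite contraction (0 ≤ A ≤ I) all of whose diagonal entries are at most α ≥ 0, and let r ≥ 1 be an integer. Then there exists a partition [n] = S_1 ⊔ S_2 ⊔ ⋯ ⊔ S_r such that for every k ∈ [r], the largest eigenvalue of the principal submatrix A(S_k) is at most 4·r^{−1/4} + α. -/
/-!
Let `B = A ⊗ 1` on `m × κ` and `p = det (diagonal X - B)`, a real stable multiaffine polynomial
whose partial derivatives are the characteristic polynomials of the principal submatrices of `B`. A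
paving of `A` with blocks indexed by `κ` is a transversal `T` of the sets `V i = {i} × κ`, and the
blocks have their eigenvalues below `x` as soon as `(x, …, x)` lies above the roots of `∂^(Tᶜ) p`.

Such a `T` is found one index at a time, by the barrier method. Suppose that `a` lies above the
roots of `p`, with all the logarithmic derivatives of `p` at `a` at most `u`, and put `r = |κ|`. On
the diagonal line of `V i` through `a`, `p` is a multiple of `∏ j, (w + x j)` with positive `x j`
such that `∑ j, 1 / x j ≤ r u`. If `r² δ u ≤ (r - 1)²`, the Cauchy–Schwarz inequality bounds each
`x j` by `∑ j, x j - r δ`. Since `∂_l p / p` has nonnegative partial fraction coefficients on that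
line, one can then replace `p` by `∑ k ∈ V i, ∂^(V i \ k) p` and lower `a` by `δ` in the
coordinates of `V i`: the new point is above the roots of the new polynomial and no other
logarithmic derivative has increased. In the end, the Rayleigh inequality shows that a summand
which is positive at the final point has that point above its roots.

The logarithmic derivatives at the starting point `(b, …, b)` are the diagonal entries of
`(b - B)⁻¹`, so that one can take `u = (b - 1 + α) / (b (b - 1))`. The choice `b = 1 + √r` gives
the bound.
-/

open ComplexOrder

/-- the principal submatrix `A(S)` -/
def subMat {n : ℕ} (A : Matrix (Fin n) (Fin n) ℂ) (S : Finset (Fin n)) :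
    Matrix {x // x ∈ S} {x // x ∈ S} ℂ :=
  A.submatrix Subtype.val Subtype.val

section Univariate

open Finset Polynomial Lagrange

open scoped ComplexConjugate

/-- `-h / p` is a Nevanlinna function: it maps the open upper half-plane to the closed one. The
condition is cleared of denominators, hence the conjugate. -/
def IsNegNevanlinna (h p : ℝ[X]) : Prop :=
  ∀ w : ℂ, 0 < w.im → (aeval w h * conj (aeval w p)).im ≤ 0

lemma coeff_card_nodal {ι : Type*} (s : Finset ι) (y : ι → ℝ) : (nodal s y).coeff #s = 1 := by
  simpa only [natDegree_nodal] using (nodal_monic (s := s) (v := y)).coeff_natDegree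

lemma coeff_card_sub_one_nodal_neg {ι : Type*} {s : Finset ι} (hs : s.Nonempty) (x : ι → ℝ) :
    (nodal s (-x)).coeff (#s - 1) = ∑ i ∈ s, x i := by
  simpa [nodal] using prod_X_sub_C_coeff_card_pred s (-x) hs.card_pos

lemma coeff_zero_nodal_neg {ι : Type*} (s : Finset ι) (x : ι → ℝ) :
    (nodal s (-x)).coeff 0 = ∏ i ∈ s, x i := by
  simp [coeff_zero_eq_eval_zero, eval_nodal]

lemma coeff_one_nodal_neg {ι : Type*} {s : Finset ι} {x : ι → ℝ} (hx : ∀ i ∈ s, x i ≠ 0) :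
    (nodal s (-x)).coeff 1 = (∏ i ∈ s, x i) * ∑ i ∈ s, (x i)⁻¹ := by
  classical
  have h := coeff_derivative (nodal s (-x)) 0
  rw [derivative_nodal, finsetSum_coeff, Nat.cast_zero, zero_add, zero_add, mul_one] at h
  rw [← h, mul_sum]
  refine sum_congr rfl fun i hi => ?_
  rw [coeff_zero_nodal_neg, ← prod_erase_mul s x hi, mul_inv_cancel_right₀ (hx i hi)]

lemma exists_map_val_eq_of_card_eq {ι α : Type*} [Nonempty α] {s : Finset ι} {M : Multiset α}
    (hM : M.card = #s) : ∃ f : ι → α, s.val.map f = M := by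
  classical
  induction s using Finset.induction_on generalizing M with
  | empty => exact ⟨fun _ => Classical.arbitrary α, by simp_all⟩
  | insert i s hi ih =>
    rw [card_insert_of_notMem hi] at hM
    obtain ⟨a, ha⟩ := M.card_pos_iff_exists_mem.1 (by omega)
    obtain ⟨M, rfl⟩ := Multiset.exists_cons_of_mem ha
    obtain ⟨f, rfl⟩ := ih (Nat.succ_injective (M.card_cons a ▸ hM))
    refine ⟨Function.update f i a, ?_⟩
    rw [insert_val_of_notMem hi, Multiset.map_cons, Function.update_self]
    refine congrArg _ (Multiset.map_congr rfl fun j hj => Function.update_of_ne ?_ a f)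
    rintro rfl
    exact hi hj

variable {h p k : ℝ[X]}

namespace IsNegNevanlinna

lemma of_C_mul {E : ℝ} (hE : 0 < E) (H : IsNegNevanlinna h (C E * p)) : IsNegNevanlinna h p := by
  intro w hw
  have hEw := H w hw
  rw [map_mul, aeval_C, map_mul, Complex.coe_algebraMap, Complex.conj_ofReal, mul_left_comm,
    Complex.im_ofReal_mul] at hEw
  exact nonpos_of_mul_nonpos_right hEw hE

lemma of_X_sub_C_mul {y : ℝ} (H : IsNegNevanlinna ((X - C y) * h) ((X - C y) * p)) :
    IsNegNevanlinna h p := by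
  intro w hw
  have hne : aeval w (X - C y) ≠ 0 := fun h0 => hw.ne' (by simpa using congrArg Complex.im h0)
  have hw' := H w hw
  simp only [map_mul] at hw'
  rw [mul_mul_mul_comm, Complex.mul_conj, Complex.im_ofReal_mul] at hw'
  exact nonpos_of_mul_nonpos_right hw' (Complex.normSq_pos.2 hne)

/-- Compare the arguments of both sides as `w → y` along the ray of direction `exp (θ * I)`. -/
lemma mul_sin_nonneg {y : ℝ} {m : ℕ} (H : IsNegNevanlinna h ((X - C y) ^ m * k))
    {θ : ℝ} (hθ : θ ∈ Set.Ioo 0 Real.pi) : 0 ≤ h.eval y * k.eval y * Real.sin (m * θ) := by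
  set u : ℂ := Complex.exp (θ * Complex.I) with hu
  have hu_im : 0 < u.im := by
    rw [hu, Complex.exp_ofReal_mul_I_im]
    exact Real.sin_pos_of_mem_Ioo hθ
  set f : ℝ → ℂ := fun ε =>
    aeval (y + ε * u) h * conj (u ^ m * aeval (y + ε * u) k) with hf
  have f_im_nonpos {ε : ℝ} (hε : 0 < ε) : (f ε).im ≤ 0 := by
    have hw := H (y + ε * u) (by simp [hε, hu_im])
    have hscale : aeval (y + ε * u) h * conj (aeval (y + ε * u) ((X - C y) ^ m * k)) =
        (ε ^ m : ℝ) * f ε := by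
      simp only [hf, map_mul, map_pow, map_sub, aeval_X, aeval_C, Complex.coe_algebraMap,
        add_sub_cancel_left, Complex.conj_ofReal, Complex.ofReal_pow]
      ring
    rw [hscale, Complex.im_ofReal_mul] at hw
    exact nonpos_of_mul_nonpos_right hw (pow_pos hε m)
  have f_zero : (f 0).im = -(h.eval y * k.eval y * Real.sin (m * θ)) := by
    have aeval_ofReal (q : ℝ[X]) : aeval (y : ℂ) q = (q.eval y : ℝ) := by
      rw [← Complex.coe_algebraMap, aeval_algebraMap_apply, coe_aeval_eq_eval]
    have hum : u ^ m = Complex.exp ((m * θ : ℝ) * Complex.I) := by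
      rw [hu, ← Complex.exp_nat_mul]
      congr 1
      push_cast
      ring
    simp only [hf, Complex.ofReal_zero, zero_mul, add_zero, aeval_ofReal, map_mul,
      Complex.conj_ofReal, hum]
    rw [Complex.im_ofReal_mul, mul_comm _ ((k.eval y : ℝ) : ℂ), Complex.im_ofReal_mul,
      Complex.conj_im, Complex.exp_ofReal_mul_I_im]
    ring
  have hcont : Continuous fun ε => (f ε).im := by fun_prop
  have h0 := le_of_tendsto ((hcont.tendsto 0).mono_left (nhdsWithin_le_nhds (s := Set.Ioi 0)))
    (Filter.eventually_of_mem self_mem_nhdsWithin fun _ => f_im_nonpos)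
  linarith

lemma eq_one_and_mul_pos {y : ℝ} {m : ℕ} (H : IsNegNevanlinna h ((X - C y) ^ m * k))
    (hm : 0 < m) (hh : h.eval y ≠ 0) (hk : k.eval y ≠ 0) :
    m = 1 ∧ 0 < h.eval y * k.eval y := by
  have hm_pos : (0 : ℝ) < m := Nat.cast_pos.2 hm
  have hm_one : (1 : ℝ) ≤ m := Nat.one_le_cast.2 hm
  have hpos : 0 < h.eval y * k.eval y := by
    have hsin := H.mul_sin_nonneg (θ := Real.pi / (2 * m)) ⟨by positivity, by
      rw [div_lt_iff₀ (by positivity)]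
      nlinarith [Real.pi_pos]⟩
    rw [show (m : ℝ) * (Real.pi / (2 * m)) = Real.pi / 2 by field_simp, Real.sin_pi_div_two,
      mul_one] at hsin
    exact hsin.lt_of_ne (mul_ne_zero hh hk).symm
  refine ⟨?_, hpos⟩
  by_contra hne
  have hm_two : (2 : ℝ) ≤ m := Nat.ofNat_le_cast.2 (by omega)
  have hsin := H.mul_sin_nonneg (θ := 3 * Real.pi / (2 * m)) ⟨by positivity, by
    rw [div_lt_iff₀ (by positivity)]
    nlinarith [Real.pi_pos]⟩
  rw [show (m : ℝ) * (3 * Real.pi / (2 * m)) = Real.pi / 2 + Real.pi by field_simp; ring,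
    Real.sin_add_pi, Real.sin_pi_div_two] at hsin
  linarith

variable {ι : Type*} [DecidableEq ι] {s : Finset ι} {y : ι → ℝ}

lemma filter_eq_singleton_and_mul_pos (H : IsNegNevanlinna h (nodal s y)) {i : ι} (hi : i ∈ s)
    (hroot : h.eval (y i) ≠ 0) :
    {j ∈ s | y j = y i} = {i} ∧ 0 < h.eval (y i) * (nodal (s.erase i) y).eval (y i) := by
  have hfactor : nodal s y =
      (X - C (y i)) ^ #{j ∈ s | y j = y i} * nodal {j ∈ s | ¬ y j = y i} y := by
    rw [nodal, ← prod_filter_mul_prod_filter_not s (fun j => y j = y i), ← prod_const, nodal]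
    congr 1
    exact prod_congr rfl fun j hj => by rw [(mem_filter.1 hj).2]
  have hne : (nodal {j ∈ s | ¬ y j = y i} y).eval (y i) ≠ 0 :=
    eval_nodal_not_at_node fun j hj => Ne.symm (mem_filter.1 hj).2
  have hmem : i ∈ {j ∈ s | y j = y i} := mem_filter.2 ⟨hi, rfl⟩
  rw [hfactor] at H
  obtain ⟨hcard, hpos⟩ := H.eq_one_and_mul_pos (card_pos.2 ⟨i, hmem⟩) hroot hne
  have hfilter : {j ∈ s | y j = y i} = {i} := by
    obtain ⟨j, hj⟩ := card_eq_one.1 hcard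
    rw [hj] at hmem ⊢
    rw [mem_singleton.1 hmem]
  refine ⟨hfilter, ?_⟩
  rwa [erase_eq, ← hfilter, ← filter_not]

lemma exists_partialFractions_of_eval_ne_zero (H : IsNegNevanlinna h (nodal s y))
    (hdeg : h.natDegree ≤ #s) (hroot : ∀ i ∈ s, h.eval (y i) ≠ 0) :
    ∃ (e : ℝ) (b : ι → ℝ), (∀ i ∈ s, 0 ≤ b i) ∧
      h = C e * nodal s y + ∑ i ∈ s, C (b i) * nodal (s.erase i) y := by
  have hinj : Set.InjOn y s := fun i hi j hj hij => by
    have hmem : j ∈ {j ∈ s | y j = y i} := mem_filter.2 ⟨hj, hij.symm⟩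
    rw [(H.filter_eq_singleton_and_mul_pos hi (hroot i hi)).1] at hmem
    exact (mem_singleton.1 hmem).symm
  refine ⟨h.coeff #s, fun i => nodalWeight s y i * h.eval (y i), fun i hi => ?_, ?_⟩
  · have hpos := (H.filter_eq_singleton_and_mul_pos hi (hroot i hi)).2
    dsimp only
    rw [nodalWeight_eq_eval_nodal_erase_inv, ← div_eq_inv_mul]
    exact div_nonneg_iff.2 (mul_nonneg_iff.1 hpos.le)
  · have hlt : (h - C (h.coeff #s) * nodal s y).degree < #s := by
      refine (degree_lt_iff_coeff_zero _ _).2 fun n hn => ?_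
      rw [coeff_sub, coeff_C_mul]
      rcases hn.eq_or_lt with rfl | hn
      · rw [coeff_card_nodal, mul_one, sub_self]
      · rw [coeff_eq_zero_of_natDegree_lt (hdeg.trans_lt hn),
          coeff_eq_zero_of_natDegree_lt (natDegree_nodal.trans_lt hn), mul_zero, sub_zero]
    rw [← sub_eq_iff_eq_add', eq_interpolate_of_eval_eq (fun i => h.eval (y i)) hinj hlt
      fun i hi => by simp [eval_nodal_at_node hi],
      interpolate_eq_nodalWeight_mul_nodal_div_X_sub_C]
    exact sum_congr rfl fun i hi => by
      rw [← nodal_erase_eq_nodal_div hi, C_mul, mul_right_comm]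

lemma exists_partialFractions (H : IsNegNevanlinna h (nodal s y)) (hdeg : h.natDegree ≤ #s) :
    ∃ (e : ℝ) (b : ι → ℝ), (∀ i ∈ s, 0 ≤ b i) ∧
      h = C e * nodal s y + ∑ i ∈ s, C (b i) * nodal (s.erase i) y := by
  induction s using Finset.strongInduction generalizing h with
  | H s ih =>
    by_cases hroot : ∀ i ∈ s, h.eval (y i) ≠ 0
    · exact H.exists_partialFractions_of_eval_ne_zero hdeg hroot
    push Not at hroot
    obtain ⟨i, hi, hzero⟩ := hroot
    obtain ⟨q, rfl⟩ := dvd_iff_isRoot.2 hzero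
    have hq_deg : q.natDegree ≤ #(s.erase i) := by
      rcases eq_or_ne q 0 with rfl | hq
      · simp
      · rw [natDegree_mul (X_sub_C_ne_zero _) hq, natDegree_X_sub_C] at hdeg
        rw [card_erase_of_mem hi]
        omega
    rw [nodal_eq_mul_nodal_erase hi] at H
    obtain ⟨e, b, hb, hq⟩ := ih (s.erase i) (erase_ssubset hi) H.of_X_sub_C_mul hq_deg
    refine ⟨e, Function.update b i 0, fun j hj => ?_, ?_⟩
    · rcases eq_or_ne j i with rfl | hji
      · simp
      · simpa [hji] using hb j (mem_erase.2 ⟨hji, hj⟩)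
    · rw [nodal_eq_mul_nodal_erase hi, ← add_sum_erase s _ hi, Function.update_self, map_zero,
        zero_mul, zero_add]
      conv_lhs => rw [hq]
      rw [mul_add, mul_sum, mul_left_comm]
      refine congrArg _ (sum_congr rfl fun j hj => ?_)
      have hji := (mem_erase.1 hj).1
      rw [Function.update_of_ne hji, nodal_eq_mul_nodal_erase (mem_erase.2 ⟨hji.symm, hi⟩),
        erase_right_comm, mul_left_comm]

omit [DecidableEq ι] in
lemma coeff_sub_mul_prod_le {x : ι → ℝ} (H : IsNegNevanlinna h (nodal s (-x)))
    (hdeg : h.natDegree ≤ #s) (hs : s.Nonempty) (hx : ∀ i ∈ s, 0 ≤ x i) {τ : ℝ}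
    (hτ : ∀ i ∈ s, x i ≤ ∑ j ∈ s, x j - τ) :
    (h.coeff (#s - 1) - τ * h.coeff #s) * ∏ i ∈ s, x i ≤ h.coeff 0 * (∑ i ∈ s, x i - τ) := by
  classical
  obtain ⟨e, b, hb, rfl⟩ := H.exists_partialFractions hdeg
  set h := C e * nodal s (-x) + ∑ i ∈ s, C (b i) * nodal (s.erase i) (-x) with hh
  have coeff_card : h.coeff #s = e := by
    have (i : ι) (hi : i ∈ s) : b i * (nodal (s.erase i) (-x)).coeff #s = 0 := by
      rw [coeff_eq_zero_of_natDegree_lt (natDegree_nodal.trans_lt (card_erase_lt_of_mem hi)),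
        mul_zero]
    simp only [hh, coeff_add, coeff_C_mul, finsetSum_coeff, coeff_card_nodal, sum_eq_zero this,
      mul_one, add_zero]
  have coeff_pred : h.coeff (#s - 1) = e * ∑ i ∈ s, x i + ∑ i ∈ s, b i := by
    have (i : ι) (hi : i ∈ s) : b i * (nodal (s.erase i) (-x)).coeff (#s - 1) = b i := by
      rw [← card_erase_of_mem hi, coeff_card_nodal, mul_one]
    simp only [hh, coeff_add, coeff_C_mul, finsetSum_coeff, coeff_card_sub_one_nodal_neg hs,
      sum_congr rfl this]
  have coeff_zero : h.coeff 0 = e * ∏ i ∈ s, x i + ∑ i ∈ s, b i * ∏ j ∈ s.erase i, x j := by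
    simp only [hh, coeff_add, coeff_C_mul, finsetSum_coeff, coeff_zero_nodal_neg]
  set T := ∑ i ∈ s, x i - τ
  calc _ = e * T * ∏ i ∈ s, x i + ∑ i ∈ s, b i * (∏ j ∈ s.erase i, x j) * x i := by
        have (i : ι) (hi : i ∈ s) :
            b i * (∏ j ∈ s.erase i, x j) * x i = b i * ∏ j ∈ s, x j := by
          rw [mul_assoc, prod_erase_mul _ _ hi]
        rw [sum_congr rfl this, ← sum_mul, coeff_pred, coeff_card]
        ring
    _ ≤ e * T * ∏ i ∈ s, x i + ∑ i ∈ s, b i * (∏ j ∈ s.erase i, x j) * T := by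
        gcongr with i hi
        · exact mul_nonneg (hb i hi) (prod_nonneg fun j hj => hx j (mem_of_mem_erase hj))
        · exact hτ i hi
    _ = _ := by
        rw [← sum_mul, coeff_zero]
        ring

end IsNegNevanlinna

lemma le_sum_sub_of_sum_inv_le {ι : Type*} {s : Finset ι} {x : ι → ℝ}
    (hx : ∀ i ∈ s, 0 < x i) {u δ : ℝ} (hu : 0 < u) (hinv : ∑ i ∈ s, (x i)⁻¹ ≤ #s * u)
    (hδ : (#s : ℝ) ^ 2 * δ * u ≤ (#s - 1) ^ 2) {i : ι} (hi : i ∈ s) :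
    x i ≤ ∑ j ∈ s, x j - #s * δ := by
  classical
  have hs : (0 : ℝ) < #s := Nat.cast_pos.2 (card_pos.2 ⟨i, hi⟩)
  have hx' (j : ι) (hj : j ∈ s.erase i) : 0 < x j := hx j (mem_of_mem_erase hj)
  have hcs : ((#s : ℝ) - 1) ^ 2 ≤ (∑ j ∈ s.erase i, x j) * ∑ j ∈ s.erase i, (x j)⁻¹ := by
    have := sum_sq_le_sum_mul_sum_of_sq_le_mul (s.erase i) (r := fun _ => 1)
      (fun j hj => (hx' j hj).le) (fun j hj => (inv_pos.2 (hx' j hj)).le)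
      fun j hj => by rw [one_pow, mul_inv_cancel₀ (hx' j hj).ne']
    rwa [sum_const, nsmul_eq_mul, mul_one, cast_card_erase_of_mem hi] at this
  have hinv' : ∑ j ∈ s.erase i, (x j)⁻¹ ≤ #s * u :=
    (sum_le_sum_of_subset_of_nonneg (erase_subset i s) fun j hj _ =>
      (inv_pos.2 (hx j hj)).le).trans hinv
  have hle : #s * u * (#s * δ) ≤ #s * u * ∑ j ∈ s.erase i, x j := by
    have := mul_le_mul_of_nonneg_left hinv' (sum_nonneg fun j hj => (hx' j hj).le)
    linarith
  linarith [le_of_mul_le_mul_left hle (mul_pos hs hu), add_sum_erase s x hi]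

end Univariate

section Determinant

open Finset Matrix Polynomial

variable {N : Type*} [Fintype N] [DecidableEq N]

lemma det_diagonal_add {R : Type*} [CommRing R] (z : N → R) (M : Matrix N N R) :
    (diagonal z + M).det =
      ∑ S, (of (S.piecewise (1 : Matrix N N R).row M.row)).det * ∏ i ∈ S, z i := by
  have hpiecewise (S : Finset N) : S.piecewise (diagonal z).row M.row =
      fun i => (if i ∈ S then z i else 1) • S.piecewise (1 : Matrix N N R).row M.row i := by
    ext i j
    by_cases hi : i ∈ S <;> simp [hi, diagonal_apply, one_apply]
  calc (diagonal z + M).det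
      = ∑ S : Finset N, detRowAlternating (S.piecewise (diagonal z).row M.row) :=
        detRowAlternating.map_add_univ (diagonal z).row M.row
    _ = _ := sum_congr rfl fun S _ => by
        rw [hpiecewise, ← AlternatingMap.coe_multilinearMap, MultilinearMap.map_smul_univ,
          prod_ite_mem, univ_inter, smul_eq_mul, mul_comm]
        rfl

lemma det_submatrix_diagonal_add {R : Type*} [CommRing R] (W : Finset N) (z : N → R)
    (M : Matrix N N R) :
    ((diagonal z + M).submatrix (Subtype.val : W → N) Subtype.val).det =
      ∑ S with Disjoint S Wᶜ,
        (M.submatrix (Subtype.val : ↥(S ∪ Wᶜ)ᶜ → N) Subtype.val).det * ∏ i ∈ S, z i := by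
  set w : N → R := W.piecewise z 0 with hw
  have hrows : of (W.piecewise (diagonal z + M).row (1 : Matrix N N R).row) =
      diagonal w + of (W.piecewise M.row (1 : Matrix N N R).row) := by
    ext i j
    by_cases hi : i ∈ W <;> simp [hw, hi, diagonal_apply]
  rw [← det_piecewise_one_eq_submatrix_det, hrows, det_diagonal_add, sum_filter]
  refine sum_congr rfl fun S _ => ?_
  split_ifs with hS
  · have hprod : ∏ i ∈ S, w i = ∏ i ∈ S, z i :=
      prod_congr rfl fun i hi => piecewise_eq_of_mem _ _ _ (by simpa using disjoint_left.1 hS hi)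
    rw [hprod, ← det_piecewise_one_eq_submatrix_det]
    congr 2
    ext i j
    by_cases hi : i ∈ S <;> by_cases hiW : i ∈ W <;> simp [piecewise, hi, hiW]
  · obtain ⟨i, hiS, hiW⟩ := not_disjoint_iff.1 hS
    rw [prod_eq_zero hiS (piecewise_eq_of_notMem _ _ _ (mem_compl.1 hiW)), mul_zero]

lemma det_diagonal_sub_ne_zero {B : Matrix N N ℂ} (hB : B.IsHermitian) {z : N → ℂ}
    (hz : ∀ i, 0 < (z i).im) : (diagonal z - B).det ≠ 0 := by
  intro h
  obtain ⟨v, hv, hv0⟩ := exists_mulVec_eq_zero_iff.2 h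
  rw [sub_mulVec, sub_eq_zero] at hv0
  have him : (star v ⬝ᵥ diagonal z *ᵥ v).im = ∑ i, (z i).im * Complex.normSq (v i) := by
    simp only [dotProduct, mulVec_diagonal, Complex.im_sum]
    refine sum_congr rfl fun i _ => ?_
    rw [Pi.star_apply, mul_left_comm, ← Complex.im_mul_ofReal, Complex.normSq_eq_conj_mul_self]
    rfl
  obtain ⟨i, hi⟩ := Function.ne_iff.1 hv
  have hpos : 0 < ∑ i, (z i).im * Complex.normSq (v i) :=
    sum_pos' (fun j _ => mul_nonneg (hz j).le (Complex.normSq_nonneg _))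
      ⟨i, mem_univ i, mul_pos (hz i) (Complex.normSq_pos.2 hi)⟩
  rw [← him, hv0] at hpos
  exact hpos.ne' (hB.im_star_dotProduct_mulVec_self v)

lemma re_le_of_isRoot_charpoly {B : Matrix N N ℂ} (hB : B.IsHermitian) {x : ℝ}
    (h : ∀ t : ℝ, x < t → (diagonal (fun _ => (t : ℂ)) - B).det ≠ 0) {z : ℂ}
    (hz : B.charpoly.IsRoot z) : z.re ≤ x := by
  have hmem : z ∈ B.charpoly.roots := (mem_roots B.charpoly_monic.ne_zero).2 hz
  rw [hB.roots_charpoly_eq_eigenvalues] at hmem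
  obtain ⟨i, -, rfl⟩ := Multiset.mem_map.1 hmem
  by_contra! hlt
  rw [IsRoot, eval_charpoly] at hz
  exact h _ hlt hz

lemma posSemidef_blockDiagonal {R m κ : Type*} [CommRing R] [PartialOrder R] [StarRing R]
    [IsOrderedAddMonoid R] [Finite m] [Finite κ] [DecidableEq κ] {A : κ → Matrix m m R}
    (hA : ∀ k, (A k).PosSemidef) : (blockDiagonal A).PosSemidef := by
  cases nonempty_fintype m
  cases nonempty_fintype κ
  refine .of_dotProduct_mulVec_nonneg
    (isHermitian_blockDiagonal_iff.2 fun k => (hA k).isHermitian) fun x => ?_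
  have h : star x ⬝ᵥ (blockDiagonal A *ᵥ x) =
      ∑ k, star (fun i => x (i, k)) ⬝ᵥ (A k *ᵥ fun i => x (i, k)) := by
    simp [dotProduct, mulVec, blockDiagonal_apply, Fintype.sum_prod_type, sum_comm (γ := m)]
  rw [h]
  exact sum_nonneg fun k _ => (hA k).dotProduct_mulVec_nonneg _

omit [Fintype N] in
lemma real_smul_one_eq_diagonal (b : ℝ) :
    b • (1 : Matrix N N ℂ) = diagonal fun _ => (b : ℂ) := by
  ext i j
  simp [diagonal_apply, one_apply]

omit [Fintype N] in
lemma posDef_smul_one_sub {B : Matrix N N ℂ} (hB : (1 - B).PosSemidef) {b : ℝ} (hb : 1 < b) :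
    (b • 1 - B).PosDef := by
  have h : b • 1 - B = (b - 1) • 1 + (1 - B) := by
    rw [sub_smul, one_smul]
    abel
  rw [h]
  exact (PosDef.one.smul (sub_pos.2 hb)).add_posSemidef hB

lemma posSemidef_mul_mul_smul_one_sub {B : Matrix N N ℂ} (hB : B.PosSemidef)
    (hB1 : (1 - B).PosSemidef) {b : ℝ} (hb : 1 ≤ b) :
    (B * (1 - B) * (b • 1 - B)).PosSemidef := by
  have hdecomp : B * (1 - B) * (b • 1 - B) =
      b • ((1 - B) * B * (1 - B)) + (b - 1) • (B * (1 - B) * B) := by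
    simp only [mul_sub, sub_mul, Matrix.mul_smul, one_mul, mul_one, mul_assoc]
    module
  have h1 := hB.mul_mul_conjTranspose_same (1 - B)
  have h2 := hB1.mul_mul_conjTranspose_same B
  rw [hB1.isHermitian.eq] at h1
  rw [hB.isHermitian.eq] at h2
  rw [hdecomp]
  exact (h1.smul (zero_le_one.trans hb)).add (h2.smul (sub_nonneg.2 hb))

/-- The scalar inequality `1 / (b - x) ≤ (1 - x) / b + x / (b - 1)` on `[0, 1]`, applied to `B`. -/
lemma posSemidef_add_sub_smul_inv {B : Matrix N N ℂ} (hB : B.PosSemidef)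
    (hB1 : (1 - B).PosSemidef) {b : ℝ} (hb : 1 < b) :
    ((b - 1) • 1 + B - (b * (b - 1)) • (b • 1 - B)⁻¹).PosSemidef := by
  have hH := posDef_smul_one_sub hB1 hb
  set H := b • 1 - B with hH_def
  have hunit : IsUnit H.det := (isUnit_iff_isUnit_det _).1 hH.isUnit
  have hmul : H * ((b - 1) • 1 + B) - (b * (b - 1)) • 1 = B * (1 - B) := by
    simp only [hH_def, mul_sub, sub_mul, mul_add, Matrix.mul_smul, Matrix.smul_mul, one_mul,
      mul_one]
    module
  have hconj : (b - 1) • 1 + B - (b * (b - 1)) • H⁻¹ = H⁻¹ * (B * (1 - B) * H) * (H⁻¹)ᴴ := by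
    rw [hH.inv.isHermitian.eq, mul_assoc, mul_nonsing_inv_cancel_right _ _ hunit, ← hmul,
      Matrix.mul_sub H⁻¹, nonsing_inv_mul_cancel_left _ _ hunit, Matrix.mul_smul, mul_one]
  rw [hconj]
  exact (posSemidef_mul_mul_smul_one_sub hB hB1 hb.le).mul_mul_conjTranspose_same _

lemma re_inv_smul_one_sub_apply_le {B : Matrix N N ℂ} (hB : B.PosSemidef)
    (hB1 : (1 - B).PosSemidef) {b : ℝ} (hb : 1 < b) (k : N) :
    ((b • 1 - B)⁻¹ k k).re ≤ (b - 1 + (B k k).re) / (b * (b - 1)) := by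
  have h := (Complex.le_def.1 ((posSemidef_add_sub_smul_inv hB hB1 hb).diag_nonneg (i := k))).1
  simp only [Matrix.sub_apply, Matrix.add_apply, Matrix.smul_apply, one_apply_eq, Complex.sub_re,
    Complex.add_re, Complex.smul_re, Complex.one_re, Complex.zero_re, smul_eq_mul, mul_one,
    sub_nonneg] at h
  rwa [le_div_iff₀' (mul_pos (by linarith) (by linarith))]

end Determinant

/-- Multiaffine polynomials in variables indexed by `N`, encoded by their coefficients: `c` stands
for `∑ S, c S * ∏ i ∈ S, X i`. -/
abbrev Multiaffine (R N : Type*) := Finset N → R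

namespace Multiaffine

open Finset Polynomial

open scoped ComplexConjugate

section Basic

variable {R K N : Type*} [CommSemiring R] [CommSemiring K] [Algebra R K] [DecidableEq N]

/-- The value of a multiaffine polynomial at a point of an algebra over its coefficients. -/
def eval [Fintype N] (c : Multiaffine R N) (z : N → K) : K :=
  ∑ S, algebraMap R K (c S) * ∏ i ∈ S, z i

/-- The partial derivative with respect to all the variables in `T`, once each. -/
def pderiv (c : Multiaffine R N) (T : Finset N) : Multiaffine R N :=
  fun S => if Disjoint S T then c (S ∪ T) else 0

/-- Translation by `t` of the coordinates in `G`. -/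
def shift (G : Finset N) (t : K) (z : N → K) : N → K :=
  fun i => z i + if i ∈ G then t else 0

/-- The sum of the partial derivatives in all but one of the variables in `G`. It is the derivative
of order `#G - 1` along the diagonal direction of `G`, divided by `(#G - 1)!`. -/
def groupDeriv (c : Multiaffine R N) (G : Finset N) : Multiaffine R N :=
  ∑ k ∈ G, c.pderiv (G.erase k)

/-- The univariate polynomial `w ↦ c.eval (shift G w a)`. -/
noncomputable def linePolynomial [Fintype N] (c : Multiaffine R N) (G : Finset N) (a : N → K) :
    K[X] :=
  ∑ T ∈ G.powerset, monomial #T ((c.pderiv T).eval a)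

@[simp] lemma pderiv_empty (c : Multiaffine R N) : c.pderiv ∅ = c := by
  ext S
  simp [pderiv]

@[simp] lemma pderiv_zero (T : Finset N) : (0 : Multiaffine R N).pderiv T = 0 := by
  ext S
  simp [pderiv]

lemma pderiv_sum {ι : Type*} (s : Finset ι) (f : ι → Multiaffine R N) (T : Finset N) :
    pderiv (∑ k ∈ s, f k) T = ∑ k ∈ s, (f k).pderiv T := by
  ext S
  by_cases h : Disjoint S T <;> simp [pderiv, h]

lemma pderiv_pderiv {T U : Finset N} (h : Disjoint T U) (c : Multiaffine R N) :
    (c.pderiv T).pderiv U = c.pderiv (T ∪ U) := by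
  ext S
  by_cases hSU : Disjoint S U <;> by_cases hST : Disjoint S T <;>
    simp [pderiv, hSU, hST, h.symm, union_assoc, union_comm U T]

lemma pderiv_pderiv_of_not_disjoint {T U : Finset N} (h : ¬ Disjoint T U) (c : Multiaffine R N) :
    (c.pderiv T).pderiv U = 0 := by
  ext S
  simp [pderiv, disjoint_comm, h]

lemma pderiv_comm (c : Multiaffine R N) (T U : Finset N) :
    (c.pderiv T).pderiv U = (c.pderiv U).pderiv T := by
  by_cases h : Disjoint T U
  · rw [pderiv_pderiv h, pderiv_pderiv h.symm, union_comm]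
  · rw [pderiv_pderiv_of_not_disjoint h, pderiv_pderiv_of_not_disjoint (mt (·.symm) h)]

lemma pderiv_pderiv_singleton {k : N} {U : Finset N} (hk : k ∉ U) (c : Multiaffine R N) :
    (c.pderiv U).pderiv {k} = c.pderiv (insert k U) := by
  rw [pderiv_pderiv (disjoint_singleton_right.2 hk), union_comm, insert_eq]

lemma pderiv_pderiv_sdiff {D U : Finset N} (h : D ⊆ U) (c : Multiaffine R N) :
    (c.pderiv D).pderiv (U \ D) = c.pderiv U := by
  rw [pderiv_pderiv disjoint_sdiff, union_sdiff_of_subset h]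

lemma pderiv_groupDeriv (c : Multiaffine R N) (G U : Finset N) :
    (c.groupDeriv G).pderiv U = (c.pderiv U).groupDeriv G := by
  simp only [groupDeriv, pderiv_sum, pderiv_comm c U]

lemma pderiv_groupDeriv_of_inter_eq_singleton {U G : Finset N} {k : N} (h : U ∩ G = {k})
    (c : Multiaffine R N) : (c.groupDeriv G).pderiv U = c.pderiv (U ∪ G) := by
  obtain ⟨hkU, hkG⟩ := mem_inter.1 (h ▸ mem_singleton_self k)
  have mem_iff (i : N) : i ∈ U ∧ i ∈ G ↔ i = k := by rw [← mem_inter, h, mem_singleton]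
  rw [groupDeriv, pderiv_sum, sum_eq_single_of_mem k hkG]
  · rw [pderiv_pderiv (disjoint_left.2 fun i hi hiU => (mem_erase.1 hi).1
      ((mem_iff i).1 ⟨hiU, (mem_erase.1 hi).2⟩))]
    congr 1
    ext i
    by_cases hi : i = k <;> simp [hi, hkU, or_comm]
  · intro l _ hlk
    exact pderiv_pderiv_of_not_disjoint
      (not_disjoint_iff.2 ⟨k, mem_erase.2 ⟨hlk.symm, hkG⟩, hkU⟩) c

lemma disjoint_or_inter_eq_singleton_of_pderiv_groupDeriv_ne_zero {c : Multiaffine R N}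
    {U G : Finset N} (h : (c.groupDeriv G).pderiv U ≠ 0) :
    Disjoint U G ∨ ∃ k, U ∩ G = {k} := by
  rw [groupDeriv, pderiv_sum] at h
  obtain ⟨k, -, hk⟩ := exists_ne_zero_of_sum_ne_zero h
  have hdisj : Disjoint (G.erase k) U := by
    by_contra hdisj
    exact hk (pderiv_pderiv_of_not_disjoint hdisj c)
  have hsub : U ∩ G ⊆ {k} := fun i hi => by
    by_contra hik
    exact disjoint_left.1 hdisj
      (mem_erase.2 ⟨mt mem_singleton.2 hik, (mem_inter.1 hi).2⟩) (mem_inter.1 hi).1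
  rcases subset_singleton_iff.1 hsub with h0 | h1
  · exact .inl (disjoint_iff_inter_eq_empty.2 h0)
  · exact .inr ⟨k, h1⟩

@[simp] lemma shift_empty (t : K) (z : N → K) : shift ∅ t z = z := by
  ext i
  simp [shift]

lemma shift_shift {G H : Finset N} (h : Disjoint G H) (t : K) (z : N → K) :
    shift G t (shift H t z) = shift (G ∪ H) t z := by
  ext i
  by_cases hG : i ∈ G
  · simp [shift, hG, Finset.disjoint_left.1 h hG]
  · simp [shift, hG]

variable [Fintype N]

omit [DecidableEq N] in
@[simp] lemma eval_zero (z : N → K) : (0 : Multiaffine R N).eval z = 0 := by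
  simp [eval]

omit [DecidableEq N] in
lemma eval_sum {ι : Type*} (s : Finset ι) (f : ι → Multiaffine R N) (z : N → K) :
    eval (∑ k ∈ s, f k) z = ∑ k ∈ s, (f k).eval z := by
  simp only [eval, Finset.sum_apply, map_sum, sum_mul]
  exact sum_comm

omit [DecidableEq N] in
lemma eval_algebraMap (c : Multiaffine R N) (a : N → R) :
    c.eval (fun i => algebraMap R K (a i)) = algebraMap R K (c.eval a) := by
  simp [eval]

omit [DecidableEq N] in
lemma eval_ofReal (c : Multiaffine ℝ N) (a : N → ℝ) :
    c.eval (fun i => (a i : ℂ)) = ((c.eval a : ℝ) : ℂ) :=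
  c.eval_algebraMap a

lemma eval_pderiv_eq_sum_superset (c : Multiaffine R N) (T : Finset N) (z : N → K) :
    (c.pderiv T).eval z = ∑ S with T ⊆ S, algebraMap R K (c S) * ∏ i ∈ S \ T, z i := by
  have hdisjoint : (c.pderiv T).eval z =
      ∑ S with Disjoint S T, algebraMap R K (c (S ∪ T)) * ∏ i ∈ S, z i := by
    rw [eval, sum_filter]
    refine sum_congr rfl fun S _ => ?_
    by_cases h : Disjoint S T <;> simp [pderiv, h]
  rw [hdisjoint]
  refine sum_nbij' (· ∪ T) (· \ T) (by simp) (by simp [sdiff_disjoint]) ?_ ?_ ?_ <;>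
    intro S hS <;> replace hS := (mem_filter.1 hS).2
  · exact union_sdiff_cancel_right hS
  · exact sdiff_union_of_subset hS
  · rw [union_sdiff_cancel_right hS]

lemma eval_add (c : Multiaffine R N) (z v : N → K) :
    c.eval (z + v) = ∑ T, (∏ i ∈ T, v i) * (c.pderiv T).eval z := by
  simp only [eval_pderiv_eq_sum_superset, mul_sum, sum_filter, mul_ite, mul_zero]
  rw [sum_comm, eval]
  refine sum_congr rfl fun S _ => ?_
  rw [add_comm, ← sum_filter, prod_congr rfl fun i _ => Pi.add_apply v z i, prod_add, mul_sum]
  refine sum_congr (by ext; simp) fun T _ => by ring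

lemma eval_shift (c : Multiaffine R N) (G : Finset N) (t : K) (z : N → K) :
    c.eval (shift G t z) = ∑ T ∈ G.powerset, t ^ #T * (c.pderiv T).eval z := by
  change c.eval (z + fun i => if i ∈ G then t else 0) = _
  rw [eval_add, ← sum_subset (subset_univ G.powerset)]
  · refine sum_congr rfl fun T hT => ?_
    rw [prod_congr rfl fun i hi => if_pos (mem_powerset.1 hT hi), prod_const]
  · intro T _ hT
    obtain ⟨i, hi, hiG⟩ := not_subset.1 (mt mem_powerset.2 hT)
    rw [prod_eq_zero hi (if_neg hiG), zero_mul]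

lemma eval_shift_singleton (c : Multiaffine R N) (l : N) (t : K) (z : N → K) :
    c.eval (shift {l} t z) = c.eval z + t * (c.pderiv {l}).eval z := by
  rw [eval_shift, ← insert_empty_eq, sum_powerset_insert (by simp)]
  simp

lemma eval_pderiv_shift {G T : Finset N} (h : G ⊆ T) (c : Multiaffine R N) (t : K) (z : N → K) :
    (c.pderiv T).eval (shift G t z) = (c.pderiv T).eval z := by
  rw [eval_shift, sum_eq_single_of_mem ∅ (empty_mem_powerset G)]
  · simp
  · intro S hS hne
    obtain ⟨i, hi⟩ := nonempty_iff_ne_empty.2 hne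
    rw [pderiv_pderiv_of_not_disjoint (not_disjoint_iff.2 ⟨i, h (mem_powerset.1 hS hi), hi⟩),
      eval_zero, mul_zero]

lemma eval_linePolynomial (c : Multiaffine R N) (G : Finset N) (a : N → K) (w : K) :
    (c.linePolynomial G a).eval w = c.eval (shift G w a) := by
  simp [linePolynomial, eval_shift, eval_finsetSum, mul_comm]

lemma coeff_linePolynomial (c : Multiaffine R N) (G : Finset N) (a : N → K) (m : ℕ) :
    (c.linePolynomial G a).coeff m = ∑ T ∈ G.powersetCard m, (c.pderiv T).eval a := by
  simp only [linePolynomial, finsetSum_coeff, coeff_monomial]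
  rw [← sum_filter, powersetCard_eq_filter]

lemma natDegree_linePolynomial_le (c : Multiaffine R N) (G : Finset N) (a : N → K) :
    (c.linePolynomial G a).natDegree ≤ #G :=
  natDegree_sum_le_of_forall_le _ _ fun _ hT =>
    (natDegree_monomial_le _).trans (card_le_card (mem_powerset.1 hT))

lemma coeff_card_linePolynomial (c : Multiaffine R N) (G : Finset N) (a : N → K) :
    (c.linePolynomial G a).coeff #G = (c.pderiv G).eval a := by
  simp [coeff_linePolynomial]

lemma coeff_zero_linePolynomial (c : Multiaffine R N) (G : Finset N) (a : N → K) :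
    (c.linePolynomial G a).coeff 0 = c.eval a := by
  simp [coeff_linePolynomial]

lemma coeff_one_linePolynomial (c : Multiaffine R N) (G : Finset N) (a : N → K) :
    (c.linePolynomial G a).coeff 1 = ∑ k ∈ G, (c.pderiv {k}).eval a := by
  simp [coeff_linePolynomial, powersetCard_one]

lemma coeff_card_sub_one_linePolynomial (c : Multiaffine R N) {G : Finset N} (hG : G.Nonempty)
    (a : N → K) : (c.linePolynomial G a).coeff (#G - 1) = (c.groupDeriv G).eval a := by
  rw [coeff_linePolynomial, groupDeriv, eval_sum]
  refine (sum_bij (fun k _ => G.erase k) (fun k hk => ?_) (fun k hk l _ => ?_) (fun T hT => ?_)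
    fun _ _ => rfl).symm
  · exact mem_powersetCard.2 ⟨erase_subset k G, card_erase_of_mem hk⟩
  · exact (erase_inj G hk).1
  · obtain ⟨hTG, hcard⟩ := mem_powersetCard.1 hT
    have hone : #(G \ T) = 1 := by
      have := hG.card_pos
      rw [card_sdiff_of_subset hTG, hcard]
      omega
    obtain ⟨k, hk⟩ := card_eq_one.1 hone
    refine ⟨k, (mem_sdiff.1 (hk ▸ mem_singleton_self k)).1, ?_⟩
    rw [erase_eq, ← hk, Finset.sdiff_sdiff_eq_self hTG]

end Basic

section Coloop

variable {R N : Type*} [CommSemiring R] [DecidableEq N] {c : Multiaffine R N} {G U : Finset N}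
  {k : N}

/-- The variable `k` divides every monomial of `c`. The name comes from the homogeneous stable case,
where the sets `U` with `c.pderiv U ≠ 0` are the independent sets of a matroid. -/
def IsColoop (c : Multiaffine R N) (k : N) : Prop :=
  ∀ U, c.pderiv U ≠ 0 → c.pderiv (insert k U) ≠ 0

lemma disjoint_of_pderiv_pderiv_ne_zero (h : (c.pderiv G).pderiv U ≠ 0) : Disjoint G U := by
  by_contra hGU
  exact h (pderiv_pderiv_of_not_disjoint hGU c)

lemma pderiv_ne_zero_of_subset (hGU : G ⊆ U) (hU : c.pderiv U ≠ 0) : c.pderiv G ≠ 0 := by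
  intro hG
  rw [← pderiv_pderiv_sdiff hGU, hG, pderiv_zero] at hU
  exact hU rfl

lemma pderiv_union_ne_zero (hU : c.pderiv U ≠ 0) (hG : ∀ k ∈ G, c.IsColoop k) :
    c.pderiv (U ∪ G) ≠ 0 := by
  induction G using Finset.induction_on with
  | empty => rwa [union_empty]
  | insert k G _ ih =>
    rw [union_insert]
    exact hG k (mem_insert_self k G) _ (ih fun l hl => hG l (mem_insert_of_mem hl))

lemma pderiv_ne_zero_of_forall_isColoop (hc : c ≠ 0) (hG : ∀ k ∈ G, c.IsColoop k) :
    c.pderiv G ≠ 0 := by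
  simpa using pderiv_union_ne_zero (U := ∅) (by simpa using hc) hG

lemma IsColoop.pderiv {T : Finset N} (hk : c.IsColoop k) (hkT : k ∉ T) :
    (c.pderiv T).IsColoop k := by
  intro U hU
  have hTU := disjoint_of_pderiv_pderiv_ne_zero hU
  rw [pderiv_pderiv hTU] at hU
  rw [pderiv_pderiv (disjoint_insert_right.2 ⟨hkT, hTU⟩), union_insert]
  exact hk _ hU

@[simp] lemma groupDeriv_zero (G : Finset N) : (0 : Multiaffine R N).groupDeriv G = 0 := by
  simp [groupDeriv]

lemma groupDeriv_ne_zero (hG : G.Nonempty) (hcG : c.pderiv G ≠ 0) : c.groupDeriv G ≠ 0 := by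
  obtain ⟨j, hj⟩ := hG
  have hjG : {j} ∩ G = {j} := inter_eq_left.2 (singleton_subset_iff.2 hj)
  intro h
  rw [← union_eq_right.2 (singleton_subset_iff.2 hj),
    ← pderiv_groupDeriv_of_inter_eq_singleton hjG, h, pderiv_zero] at hcG
  exact hcG rfl

lemma IsColoop.groupDeriv (hk : c.IsColoop k) (hkG : k ∉ G) (hG : G.Nonempty)
    (hcoloop : ∀ l ∈ G, c.IsColoop l) : (c.groupDeriv G).IsColoop k := by
  intro U hU
  rcases disjoint_or_inter_eq_singleton_of_pderiv_groupDeriv_ne_zero hU with hUG | ⟨j, hj⟩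
  · rw [pderiv_groupDeriv] at hU ⊢
    have hcU : c.pderiv U ≠ 0 := by
      rintro h
      exact hU (by rw [h, groupDeriv_zero])
    refine groupDeriv_ne_zero hG ?_
    rw [pderiv_pderiv (disjoint_insert_left.2 ⟨hkG, hUG⟩)]
    exact pderiv_union_ne_zero (hk U hcU) hcoloop
  · rw [pderiv_groupDeriv_of_inter_eq_singleton hj] at hU
    rw [pderiv_groupDeriv_of_inter_eq_singleton ((insert_inter_of_notMem hkG).trans hj),
      insert_union]
    exact hk _ hU

end Coloop

section Stable

variable {N : Type*} [Fintype N] [DecidableEq N] {c : Multiaffine ℝ N} {G : Finset N} {a : N → ℝ}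

/-- Stability: nonvanishing on the product of the open upper half-planes. By Hurwitz's theorem it
passes to the nonzero partial derivatives; requiring it of all of them makes the notion hereditary
by definition. The zero polynomial is stable in this sense. -/
def IsStable (c : Multiaffine ℝ N) : Prop :=
  ∀ U, c.pderiv U ≠ 0 → ∀ z : N → ℂ, (∀ i, 0 < (z i).im) → (c.pderiv U).eval z ≠ 0

/-- Positivity at `a` of all the nonzero partial derivatives. For a stable polynomial with positive
leading coefficient this means that `a` lies above all the roots, in the sense that the polynomial
is positive on the orthant `a + ℝ≥0 ^ N`. -/
def IsAboveRoots (c : Multiaffine ℝ N) (a : N → ℝ) : Prop :=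
  ∀ U, c.pderiv U ≠ 0 → 0 < (c.pderiv U).eval a

lemma IsAboveRoots.pderiv (ha : c.IsAboveRoots a) (T : Finset N) :
    (c.pderiv T).IsAboveRoots a := by
  intro U hU
  have hTU := disjoint_of_pderiv_pderiv_ne_zero hU
  rw [pderiv_pderiv hTU] at hU ⊢
  exact ha _ hU

lemma IsAboveRoots.eval_pos (ha : c.IsAboveRoots a) (hc : c ≠ 0) : 0 < c.eval a := by
  simpa [hc] using ha ∅

lemma IsAboveRoots.eval_nonneg (ha : c.IsAboveRoots a) : 0 ≤ c.eval a := by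
  rcases eq_or_ne c 0 with rfl | hc
  · simp
  · exact (ha.eval_pos hc).le

lemma IsAboveRoots.mono (ha : c.IsAboveRoots a) {b : N → ℝ} (hab : a ≤ b) :
    c.IsAboveRoots b := by
  intro U hU
  rw [← add_sub_cancel a b, eval_add]
  refine sum_pos' (fun T _ => ?_) ⟨∅, mem_univ ∅, by simpa using ha U hU⟩
  exact mul_nonneg (prod_nonneg fun i _ => sub_nonneg.2 (hab i))
    ((ha.pderiv U).pderiv T).eval_nonneg

omit [DecidableEq N] in
lemma continuous_eval (c : Multiaffine ℝ N) : Continuous fun z : N → ℂ => c.eval z := by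
  unfold eval
  fun_prop

namespace IsStable

lemma eval_ne_zero (hc : c.IsStable) (h0 : c ≠ 0) {z : N → ℂ} (hz : ∀ i, 0 < (z i).im) :
    c.eval z ≠ 0 := by
  simpa using hc ∅ (by rwa [pderiv_empty]) z hz

lemma pderiv (hc : c.IsStable) (T : Finset N) : (c.pderiv T).IsStable := by
  intro U hU
  have hTU := disjoint_of_pderiv_pderiv_ne_zero hU
  rw [pderiv_pderiv hTU] at hU ⊢
  exact hc _ hU

/-- Otherwise the affine function `w ↦ c.eval (shift {l} w z)` has a root in the upper
half-plane. -/
lemma im_eval_pderiv_mul_conj_nonpos_of_pos (hc : c.IsStable) (l : N) {z : N → ℂ}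
    (hz : ∀ i, 0 < (z i).im) : ((c.pderiv {l}).eval z * conj (c.eval z)).im ≤ 0 := by
  rcases eq_or_ne c 0 with rfl | h0
  · simp
  by_contra! hpos
  set p := (c.pderiv {l}).eval z with hp
  set q := c.eval z with hq
  have hp0 : p ≠ 0 := by
    rintro h
    simp [h] at hpos
  have hroot : 0 < (-q / p).im := by
    simp only [Complex.mul_im, Complex.conj_re, Complex.conj_im] at hpos
    rw [Complex.div_im, ← sub_div, Complex.neg_im, Complex.neg_re]
    exact div_pos (by linarith) (Complex.normSq_pos.2 hp0)
  refine hc.eval_ne_zero h0 (z := shift {l} (-q / p) z) (fun i => ?_) ?_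
  · rw [shift, Complex.add_im]
    split_ifs
    · exact add_pos (hz i) hroot
    · simpa using hz i
  · rw [eval_shift_singleton, ← hp, ← hq, div_mul_cancel₀ _ hp0, add_neg_cancel]

lemma im_eval_pderiv_mul_conj_nonpos (hc : c.IsStable) (l : N) {z : N → ℂ}
    (hz : ∀ i, 0 ≤ (z i).im) : ((c.pderiv {l}).eval z * conj (c.eval z)).im ≤ 0 := by
  let path : ℝ → N → ℂ := fun ε i => z i + ε * Complex.I
  have hpath : Continuous path := by fun_prop
  have hcont : Continuous fun ε => ((c.pderiv {l}).eval (path ε) * conj (c.eval (path ε))).im :=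
    Complex.continuous_im.comp (((continuous_eval _).comp hpath).mul
      (Complex.continuous_conj.comp ((continuous_eval _).comp hpath)))
  have hlim := (hcont.tendsto 0).mono_left (nhdsWithin_le_nhds (s := Set.Ioi 0))
  have hle := le_of_tendsto hlim (Filter.eventually_of_mem self_mem_nhdsWithin fun ε hε =>
    hc.im_eval_pderiv_mul_conj_nonpos_of_pos l fun i => by
      simpa [path] using add_pos_of_nonneg_of_pos (hz i) hε)
  simpa [path] using hle

lemma rayleigh (hc : c.IsStable) (k l : N) (a : N → ℝ) :
    c.eval a * ((c.pderiv {k}).pderiv {l}).eval a ≤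
      (c.pderiv {k}).eval a * (c.pderiv {l}).eval a := by
  have h := hc.im_eval_pderiv_mul_conj_nonpos k (z := shift {l} Complex.I fun i => (a i : ℂ))
    fun i => by by_cases h : i = l <;> simp [shift, h]
  simp only [eval_shift_singleton, eval_ofReal, map_add, map_mul, Complex.conj_ofReal,
    Complex.conj_I, Complex.mul_im, Complex.add_im, Complex.add_re, Complex.mul_re,
    Complex.neg_im, Complex.neg_re, Complex.I_im, Complex.I_re, Complex.ofReal_im,
    Complex.ofReal_re] at h
  linarith

lemma norm_eval_le_norm_eval_shift (hc : c.IsStable) (G : Finset N) {s : ℝ} (hs : 0 ≤ s)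
    {z : N → ℂ} (hz : ∀ i, 0 ≤ (z i).im) :
    ‖c.eval z‖ ≤ ‖c.eval (shift G (s * Complex.I) z)‖ := by
  induction G using Finset.induction_on with
  | empty => rw [shift_empty]
  | insert l G hl ih =>
    refine ih.trans ?_
    rw [insert_eq, ← shift_shift (disjoint_singleton_left.2 hl), eval_shift_singleton]
    have him := hc.im_eval_pderiv_mul_conj_nonpos l (z := shift G (s * Complex.I) z) fun i => by
      by_cases h : i ∈ G <;> simp [shift, h, hz i, add_nonneg (hz i) hs]
    set p := (c.pderiv {l}).eval (shift G (s * Complex.I) z)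
    set q := c.eval (shift G (s * Complex.I) z)
    have hre : 0 ≤ (q * conj (s * Complex.I * p)).re := by
      have : (q * conj (s * Complex.I * p)).re = -(s * (p * conj q).im) := by
        simp only [map_mul, Complex.conj_ofReal, Complex.conj_I, Complex.mul_re, Complex.mul_im,
          Complex.neg_re, Complex.neg_im, Complex.ofReal_re, Complex.ofReal_im, Complex.conj_re,
          Complex.conj_im, Complex.I_re, Complex.I_im]
        ring
      rw [this]
      exact neg_nonneg.2 (mul_nonpos_of_nonneg_of_nonpos hs him)
    rw [← sq_le_sq₀ (norm_nonneg _) (norm_nonneg _), ← Complex.normSq_eq_norm_sq,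
      ← Complex.normSq_eq_norm_sq, Complex.normSq_add]
    linarith [Complex.normSq_nonneg (s * Complex.I * p)]

/-- On the line in the direction of `G`, the value of `c.groupDeriv G` at the base point is, up to
the leading coefficient, minus the sum of the roots, all of which lie in the lower half-plane. -/
lemma eval_groupDeriv_ne_zero (hc : c.IsStable) (hG : G.Nonempty) (hcG : c.pderiv G ≠ 0)
    {z : N → ℂ} (hz : ∀ i, 0 < (z i).im) : (c.groupDeriv G).eval z ≠ 0 := by
  intro h0
  have hc0 : c ≠ 0 := by simpa using pderiv_ne_zero_of_subset (empty_subset G) hcG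
  set F := c.linePolynomial G z with hF
  have hlead : F.coeff #G ≠ 0 := by
    rw [hF, coeff_card_linePolynomial]
    exact hc G hcG z hz
  have hF0 : F ≠ 0 := by
    rintro h
    simp [h] at hlead
  have hdeg : F.natDegree = #G :=
    (natDegree_linePolynomial_le c G z).antisymm (le_natDegree_of_ne_zero hlead)
  have hroots : ∀ w ∈ F.roots, w.im < 0 := by
    intro w hw
    by_contra! hw0
    rw [mem_roots hF0, IsRoot, eval_linePolynomial] at hw
    refine hc.eval_ne_zero hc0 (fun i => ?_) hw
    by_cases h : i ∈ G <;> simp [shift, h, hz i, add_pos_of_pos_of_nonneg (hz i) hw0]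
  have hsum : F.roots.sum = 0 := by
    have hnext : F.nextCoeff = 0 := by
      rw [nextCoeff_of_natDegree_pos (hdeg ▸ hG.card_pos), hdeg, hF,
        coeff_card_sub_one_linePolynomial c hG, h0]
    rw [(IsAlgClosed.splits F).nextCoeff_eq_neg_sum_roots_mul_leadingCoeff] at hnext
    simpa [hF0] using hnext
  have hne : F.roots ≠ 0 := by
    rw [← Multiset.card_pos, ← (IsAlgClosed.splits F).natDegree_eq_card_roots, hdeg]
    exact hG.card_pos
  have hlt := Multiset.sum_lt_sum_of_nonempty hne hroots
  have him : (F.roots.map Complex.im).sum = 0 := by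
    simpa [hsum] using (map_multiset_sum Complex.imAddGroupHom F.roots).symm
  simp [him] at hlt

lemma groupDeriv (hc : c.IsStable) (hG : G.Nonempty) (hcoloop : ∀ k ∈ G, c.IsColoop k) :
    (c.groupDeriv G).IsStable := by
  intro U hU
  rcases disjoint_or_inter_eq_singleton_of_pderiv_groupDeriv_ne_zero hU with hUG | ⟨k, hk⟩
  · rw [pderiv_groupDeriv] at hU ⊢
    have hcU : c.pderiv U ≠ 0 := by
      rintro h
      exact hU (by rw [h, groupDeriv_zero])
    refine fun z => (hc.pderiv U).eval_groupDeriv_ne_zero hG ?_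
    rw [pderiv_pderiv hUG]
    exact pderiv_union_ne_zero hcU hcoloop
  · rw [pderiv_groupDeriv_of_inter_eq_singleton hk] at hU ⊢
    exact hc _ hU

end IsStable

lemma aeval_linePolynomial (c : Multiaffine ℝ N) (G : Finset N) (a : N → ℝ) (w : ℂ) :
    aeval w (c.linePolynomial G a) = c.eval (shift G w fun i => (a i : ℂ)) := by
  simp only [eval_shift, linePolynomial, map_sum, aeval_monomial, eval_ofReal,
    Complex.coe_algebraMap, mul_comm]

namespace IsStable

lemma isNegNevanlinna_linePolynomial (hc : c.IsStable) (l : N) (G : Finset N) (a : N → ℝ) :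
    IsNegNevanlinna ((c.pderiv {l}).linePolynomial G a) (c.linePolynomial G a) := by
  intro w hw
  rw [aeval_linePolynomial, aeval_linePolynomial]
  exact hc.im_eval_pderiv_mul_conj_nonpos l fun i => by
    by_cases h : i ∈ G <;> simp [shift, h, hw.le]

/-- A root `w` in the upper half-plane would come with all of the segment from `w` down to the real
axis, since moving up increases the modulus. -/
lemma aeval_linePolynomial_ne_zero (hc : c.IsStable) (h0 : c.linePolynomial G a ≠ 0) {w : ℂ}
    (hw : 0 < w.im) : aeval w (c.linePolynomial G a) ≠ 0 := by
  intro hzero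
  have hroot (s : ℝ) (hs : s ∈ Set.Icc 0 w.im) :
      w - s * Complex.I ∈ (c.linePolynomial G a).rootSet ℂ := by
    refine (mem_rootSet_of_ne h0).2 ?_
    have hle := hc.norm_eval_le_norm_eval_shift G hs.1
      (z := shift G (w - s * Complex.I) fun i => (a i : ℂ)) fun i => by
        by_cases h : i ∈ G <;> simp [shift, h, hs.2]
    have hshift : shift G (s * Complex.I) (shift G (w - s * Complex.I) fun i => (a i : ℂ)) =
        shift G w fun i => (a i : ℂ) := by
      ext i
      by_cases h : i ∈ G <;> simp [shift, h, add_assoc]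
    rw [hshift, ← aeval_linePolynomial, ← aeval_linePolynomial, hzero, norm_zero] at hle
    exact norm_le_zero_iff.1 hle
  have hinj : Set.InjOn (fun s : ℝ => w - s * Complex.I) (Set.Icc 0 w.im) :=
    fun s _ t _ hst => by simpa using hst
  exact (Set.Icc_infinite hw).image hinj
    ((rootSet_finite _ ℂ).subset (Set.image_subset_iff.2 hroot))

lemma splits_linePolynomial (hc : c.IsStable) (G : Finset N) (a : N → ℝ) :
    (c.linePolynomial G a).Splits := by
  rcases eq_or_ne (c.linePolynomial G a) 0 with h0 | h0
  · rw [h0]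
    exact .zero
  refine .of_splits_map (algebraMap ℝ ℂ) (IsAlgClosed.splits _) fun w hw => ?_
  have hw0 : aeval w (c.linePolynomial G a) = 0 := by
    rw [← eval_map_algebraMap]
    exact isRoot_of_mem_roots hw
  rcases lt_trichotomy w.im 0 with h | h | h
  · refine absurd ?_ (hc.aeval_linePolynomial_ne_zero h0 (w := conj w) (by simpa using h))
    rw [aeval_conj, hw0, map_zero]
  · exact ⟨w.re, Complex.ext (by simp) (by simp [h])⟩
  · exact absurd hw0 (hc.aeval_linePolynomial_ne_zero h0 h)

lemma exists_linePolynomial_eq_nodal (hc : c.IsStable) (ha : c.IsAboveRoots a)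
    (hcG : c.pderiv G ≠ 0) : ∃ x : N → ℝ, (∀ i ∈ G, 0 < x i) ∧
      c.linePolynomial G a = C ((c.pderiv G).eval a) * Lagrange.nodal G (-x) := by
  set F := c.linePolynomial G a
  have hlead : F.coeff #G = (c.pderiv G).eval a := coeff_card_linePolynomial c G a
  have hlead0 : F.coeff #G ≠ 0 := hlead ▸ (ha G hcG).ne'
  have hdeg : F.natDegree = #G :=
    (natDegree_linePolynomial_le c G a).antisymm (le_natDegree_of_ne_zero hlead0)
  have hsplits : F.Splits := hc.splits_linePolynomial G a
  obtain ⟨y, hy⟩ := exists_map_val_eq_of_card_eq (hdeg ▸ hsplits.natDegree_eq_card_roots.symm)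
  refine ⟨-y, fun i hi => ?_, ?_⟩
  · have hmem : y i ∈ F.roots := hy ▸ Multiset.mem_map_of_mem y hi
    by_contra! hyi
    have hyi' : a ≤ shift G (y i) a := fun j => by
      by_cases h : j ∈ G <;> simp_all [shift]
    have hpos := (ha.mono hyi').eval_pos
      (by simpa using pderiv_ne_zero_of_subset (empty_subset G) hcG)
    rw [← eval_linePolynomial] at hpos
    exact hpos.ne' (isRoot_of_mem_roots hmem)
  · rw [neg_neg, hsplits.eq_prod_roots, leadingCoeff, hdeg, hlead, ← hy, Multiset.map_map]
    rfl

end IsStable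

lemma eval_groupDeriv_shift (c : Multiaffine ℝ N) (G : Finset N) (t : ℝ) (a : N → ℝ) :
    (c.groupDeriv G).eval (shift G t a) =
      (c.groupDeriv G).eval a + #G * t * (c.pderiv G).eval a := by
  rw [groupDeriv, eval_sum, eval_sum, mul_assoc, ← nsmul_eq_mul, ← sum_const, ← sum_add_distrib]
  refine sum_congr rfl fun k hk => ?_
  have hshift : shift G t a = shift (G.erase k) t (shift {k} t a) := by
    rw [shift_shift (disjoint_singleton_right.2 (notMem_erase k G)), union_comm, ← insert_eq,
      insert_erase hk]
  rw [hshift, eval_pderiv_shift subset_rfl, eval_shift_singleton,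
    pderiv_pderiv_singleton (notMem_erase k G), insert_erase hk]

namespace IsStable

variable {u δ : ℝ}

lemma eval_pderiv_pderiv_singleton_le (hc : c.IsStable) (ha : c.IsAboveRoots a) {k : N}
    (hk : (c.pderiv {k}).eval a ≤ u * c.eval a) (l : N) :
    ((c.pderiv {l}).pderiv {k}).eval a ≤ u * (c.pderiv {l}).eval a := by
  rcases eq_or_ne (c.pderiv {l}) 0 with hl | hl
  · simp [hl]
  have hpos : 0 < c.eval a :=
    ha.eval_pos (by simpa using pderiv_ne_zero_of_subset (empty_subset _) hl)
  refine le_of_mul_le_mul_left ?_ hpos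
  calc c.eval a * ((c.pderiv {l}).pderiv {k}).eval a
      ≤ (c.pderiv {l}).eval a * (c.pderiv {k}).eval a := hc.rayleigh l k a
    _ ≤ (c.pderiv {l}).eval a * (u * c.eval a) := by
        gcongr
        exact (ha {l} hl).le
    _ = c.eval a * (u * (c.pderiv {l}).eval a) := by ring

lemma eval_pderiv_pderiv_le (hc : c.IsStable) (ha : c.IsAboveRoots a) {k : N}
    (hk : (c.pderiv {k}).eval a ≤ u * c.eval a) (U : Finset N) :
    ((c.pderiv U).pderiv {k}).eval a ≤ u * (c.pderiv U).eval a := by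
  induction U using Finset.induction_on with
  | empty => simpa using hk
  | insert l U hl ih =>
    rw [← pderiv_pderiv_singleton hl]
    exact (hc.pderiv U).eval_pderiv_pderiv_singleton_le (ha.pderiv U) ih l

lemma exists_linePolynomial_eq_nodal_of_barrier_le (hc : c.IsStable) (ha : c.IsAboveRoots a)
    (hcG : c.pderiv G ≠ 0) (hu : 0 < u) (hbar : ∀ k ∈ G, (c.pderiv {k}).eval a ≤ u * c.eval a)
    (hδ : (#G : ℝ) ^ 2 * δ * u ≤ (#G - 1) ^ 2) :
    ∃ x : N → ℝ, (∀ i ∈ G, 0 < x i ∧ x i ≤ ∑ j ∈ G, x j - #G * δ) ∧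
      c.linePolynomial G a = C ((c.pderiv G).eval a) * Lagrange.nodal G (-x) := by
  obtain ⟨x, hx, hline⟩ := hc.exists_linePolynomial_eq_nodal ha hcG
  have hinv : ∑ i ∈ G, (x i)⁻¹ ≤ #G * u := by
    have hle : (c.linePolynomial G a).coeff 1 ≤ #G * u * (c.linePolynomial G a).coeff 0 := by
      rw [coeff_one_linePolynomial, coeff_zero_linePolynomial, mul_assoc, ← nsmul_eq_mul]
      exact sum_le_card_nsmul _ _ _ hbar
    rw [hline, coeff_C_mul, coeff_C_mul, coeff_zero_nodal_neg,
      coeff_one_nodal_neg fun i hi => (hx i hi).ne'] at hle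
    refine le_of_mul_le_mul_left ?_ (mul_pos (ha G hcG) (prod_pos hx))
    linarith
  exact ⟨x, fun i hi => ⟨hx i hi, le_sum_sub_of_sum_inv_le hx hu hinv hδ hi⟩, hline⟩

lemma eval_groupDeriv_shift_pos_and_le (hc : c.IsStable) (ha : c.IsAboveRoots a) (hG : G.Nonempty)
    (hcG : c.pderiv G ≠ 0) (hu : 0 < u) (hbar : ∀ k ∈ G, (c.pderiv {k}).eval a ≤ u * c.eval a)
    (hδ : (#G : ℝ) ^ 2 * δ * u ≤ (#G - 1) ^ 2) :
    0 < (c.groupDeriv G).eval (shift G (-δ) a) ∧ ∀ l,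
      ((c.pderiv {l}).groupDeriv G).eval (shift G (-δ) a) * c.eval a ≤
        (c.pderiv {l}).eval a * (c.groupDeriv G).eval (shift G (-δ) a) := by
  obtain ⟨x, hx, hline⟩ := hc.exists_linePolynomial_eq_nodal_of_barrier_le ha hcG hu hbar hδ
  set E := (c.pderiv G).eval a
  have hE0 : 0 < E := ha G hcG
  have hca : c.eval a = E * ∏ i ∈ G, x i := by
    rw [← coeff_zero_linePolynomial c G, hline, coeff_C_mul, coeff_zero_nodal_neg]
  have hgd : (c.groupDeriv G).eval (shift G (-δ) a) = E * (∑ i ∈ G, x i - #G * δ) := by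
    rw [eval_groupDeriv_shift, ← coeff_card_sub_one_linePolynomial c hG, hline, coeff_C_mul,
      coeff_card_sub_one_nodal_neg hG]
    ring
  refine ⟨?_, fun l => ?_⟩
  · obtain ⟨i, hi⟩ := hG
    rw [hgd]
    exact mul_pos hE0 ((hx i hi).1.trans_le (hx i hi).2)
  · have hH := hc.isNegNevanlinna_linePolynomial l G a
    rw [hline] at hH
    have hle := (hH.of_C_mul hE0).coeff_sub_mul_prod_le (natDegree_linePolynomial_le _ G a) hG
      (fun i hi => (hx i hi).1.le) fun i hi => (hx i hi).2
    rw [coeff_card_sub_one_linePolynomial _ hG, coeff_card_linePolynomial,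
      coeff_zero_linePolynomial] at hle
    rw [hgd, hca, eval_groupDeriv_shift]
    linarith [mul_le_mul_of_nonneg_left hle hE0.le]

lemma isAboveRoots_groupDeriv (hc : c.IsStable) (ha : c.IsAboveRoots a) (hG : G.Nonempty)
    (hcoloop : ∀ k ∈ G, c.IsColoop k) (hu : 0 < u)
    (hbar : ∀ k ∈ G, (c.pderiv {k}).eval a ≤ u * c.eval a)
    (hδ : (#G : ℝ) ^ 2 * δ * u ≤ (#G - 1) ^ 2) :
    (c.groupDeriv G).IsAboveRoots (shift G (-δ) a) := by
  intro U hU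
  rcases disjoint_or_inter_eq_singleton_of_pderiv_groupDeriv_ne_zero hU with hUG | ⟨k, hk⟩
  · rw [pderiv_groupDeriv] at hU ⊢
    have hcU : c.pderiv U ≠ 0 := by
      rintro h
      exact hU (by rw [h, groupDeriv_zero])
    refine ((hc.pderiv U).eval_groupDeriv_shift_pos_and_le (ha.pderiv U) hG ?_ hu
      (fun k hk => hc.eval_pderiv_pderiv_le ha (hbar k hk) U) hδ).1
    rw [pderiv_pderiv hUG]
    exact pderiv_union_ne_zero hcU hcoloop
  · rw [pderiv_groupDeriv_of_inter_eq_singleton hk] at hU ⊢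
    rw [eval_pderiv_shift subset_union_right]
    exact ha _ hU

lemma eval_pderiv_groupDeriv_shift_le (hc : c.IsStable) (ha : c.IsAboveRoots a) (hG : G.Nonempty)
    (hcG : c.pderiv G ≠ 0) (hu : 0 < u) (hbar : ∀ k ∈ G, (c.pderiv {k}).eval a ≤ u * c.eval a)
    (hδ : (#G : ℝ) ^ 2 * δ * u ≤ (#G - 1) ^ 2) {l : N} {v : ℝ}
    (hl : (c.pderiv {l}).eval a ≤ v * c.eval a) :
    ((c.groupDeriv G).pderiv {l}).eval (shift G (-δ) a) ≤
      v * (c.groupDeriv G).eval (shift G (-δ) a) := by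
  obtain ⟨hpos, hle⟩ := hc.eval_groupDeriv_shift_pos_and_le ha hG hcG hu hbar hδ
  have hca : 0 < c.eval a :=
    ha.eval_pos (by simpa using pderiv_ne_zero_of_subset (empty_subset G) hcG)
  rw [pderiv_groupDeriv]
  refine le_of_mul_le_mul_right ?_ hca
  calc _ ≤ _ := hle l
    _ ≤ _ := mul_le_mul_of_nonneg_right hl hpos.le
    _ = _ := by ring

/-- By the Rayleigh inequality, the derivative in `l` is positive as soon as those in `k` and
`{k, l}` are. -/
lemma isAboveRoots_of_isAboveRoots_pderiv (hc : c.IsStable) (hpos : 0 < c.eval a) {k : N}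
    (hk : c.IsColoop k) (hka : (c.pderiv {k}).IsAboveRoots a) : c.IsAboveRoots a := by
  have pos_of_mem {U : Finset N} (hkU : k ∈ U) (hU : c.pderiv U ≠ 0) :
      0 < (c.pderiv U).eval a := by
    rw [← pderiv_pderiv_sdiff (singleton_subset_iff.2 hkU)] at hU ⊢
    exact hka _ hU
  intro U
  induction U using Finset.induction_on with
  | empty => simpa using fun _ => hpos
  | insert l U hl ih =>
    intro hU
    by_cases hkU : k ∈ insert l U
    · exact pos_of_mem hkU hU
    have hU0 : c.pderiv U ≠ 0 := pderiv_ne_zero_of_subset (subset_insert l U) hU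
    have hrayleigh := (hc.pderiv U).rayleigh l k a
    rw [pderiv_pderiv_singleton hl, pderiv_pderiv_singleton hkU,
      pderiv_pderiv_singleton fun h => hkU (mem_insert_of_mem h)] at hrayleigh
    exact pos_of_mul_pos_left ((mul_pos (ih hU0)
      (pos_of_mem (mem_insert_self k _) (hk _ hU))).trans_le hrayleigh)
      (pos_of_mem (mem_insert_self k U) (hk _ hU0)).le

lemma exists_isAboveRoots_pderiv_erase (hc : c.IsStable) (hG : G.Nonempty)
    (hcG : c.pderiv G ≠ 0) (hcoloop : ∀ k ∈ G, c.IsColoop k)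
    (ha : (c.groupDeriv G).IsAboveRoots a) :
    ∃ k ∈ G, (c.pderiv (G.erase k)).IsAboveRoots a := by
  have hpos := ha.eval_pos (groupDeriv_ne_zero hG hcG)
  rw [Multiaffine.groupDeriv, eval_sum, ← sum_const_zero (s := G)] at hpos
  obtain ⟨k, hkG, hk⟩ := exists_lt_of_sum_lt hpos
  refine ⟨k, hkG, (hc.pderiv _).isAboveRoots_of_isAboveRoots_pderiv hk
    ((hcoloop k hkG).pderiv (notMem_erase k G)) ?_⟩
  have hkG' : {k} ⊆ G := singleton_subset_iff.2 hkG
  rw [pderiv_pderiv_singleton (notMem_erase k G), insert_erase hkG, ← union_eq_right.2 hkG',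
    ← pderiv_groupDeriv_of_inter_eq_singleton (inter_eq_left.2 hkG')]
  exact ha.pderiv {k}

lemma exists_isAboveRoots_pderiv_union_erase (hc : c.IsStable) (hG : G.Nonempty) {D : Finset N}
    (hDG : Disjoint D G) (hne : c.pderiv (D ∪ G) ≠ 0) (hcoloop : ∀ k ∈ G, c.IsColoop k)
    (ha : ((c.groupDeriv G).pderiv D).IsAboveRoots a) :
    ∃ k ∈ G, (c.pderiv (D ∪ G.erase k)).IsAboveRoots a := by
  rw [pderiv_groupDeriv] at ha
  rw [← pderiv_pderiv hDG] at hne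
  obtain ⟨k, hk, hka⟩ := (hc.pderiv D).exists_isAboveRoots_pderiv_erase hG hne
    (fun l hl => (hcoloop l hl).pderiv (disjoint_right.1 hDG hl)) ha
  rw [pderiv_pderiv (hDG.mono_right (erase_subset k G))] at hka
  exact ⟨k, hk, hka⟩

lemma exists_transversal {ι : Type*} {I : Finset ι} {V : ι → Finset N}
    (hc : c.IsStable) (ha : c.IsAboveRoots a) (hc0 : c ≠ 0) (hV : ∀ i ∈ I, (V i).Nonempty)
    (hdisj : (I : Set ι).PairwiseDisjoint V) (hcoloop : ∀ i ∈ I, ∀ k ∈ V i, c.IsColoop k)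
    (hu : 0 < u) (hbar : ∀ i ∈ I, ∀ k ∈ V i, (c.pderiv {k}).eval a ≤ u * c.eval a)
    (hδ : ∀ i ∈ I, (#(V i) : ℝ) ^ 2 * δ * u ≤ (#(V i) - 1) ^ 2) :
    ∃ T ⊆ I.biUnion V, (∀ i ∈ I, ∃ k, V i ∩ T = {k}) ∧
      (c.pderiv (I.biUnion V \ T)).IsAboveRoots (shift (I.biUnion V) (-δ) a) := by
  classical
  induction I using Finset.induction_on generalizing c a with
  | empty => exact ⟨∅, subset_rfl, by simp, by simpa using ha⟩
  | insert i I hi ih =>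
    rw [coe_insert, Set.pairwiseDisjoint_insert_of_notMem (by simpa using hi)] at hdisj
    simp only [forall_mem_insert] at hV hcoloop hbar hδ
    have hci : c.pderiv (V i) ≠ 0 := pderiv_ne_zero_of_forall_isColoop hc0 hcoloop.1
    have hdisj_i : Disjoint (I.biUnion V) (V i) :=
      (disjoint_biUnion_left _ _ _).2 fun j hj => (hdisj.2 j hj).symm
    obtain ⟨T, hTI, hT, hTa⟩ := ih (hc.groupDeriv hV.1 hcoloop.1)
      (hc.isAboveRoots_groupDeriv ha hV.1 hcoloop.1 hu hbar.1 hδ.1) (groupDeriv_ne_zero hV.1 hci)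
      hV.2 hdisj.1
      (fun j hj k hk => (hcoloop.2 j hj k hk).groupDeriv
        (disjoint_left.1 hdisj_i (mem_biUnion.2 ⟨j, hj, hk⟩)) hV.1 hcoloop.1)
      (fun j hj k hk => hc.eval_pderiv_groupDeriv_shift_le ha hV.1 hci hu hbar.1 hδ.1
        (hbar.2 j hj k hk)) hδ.2
    have hdisj_D : Disjoint (I.biUnion V \ T) (V i) := hdisj_i.mono_left sdiff_subset
    rw [shift_shift hdisj_i] at hTa
    obtain ⟨k, hki, hk⟩ := hc.exists_isAboveRoots_pderiv_union_erase hV.1 hdisj_D (by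
      refine pderiv_union_ne_zero (pderiv_ne_zero_of_forall_isColoop hc0 fun k hk => ?_) hcoloop.1
      obtain ⟨j, hj, hkj⟩ := mem_biUnion.1 (sdiff_subset hk)
      exact hcoloop.2 j hj k hkj) hcoloop.1 hTa
    have hsdiff : I.biUnion V \ T ∪ (V i).erase k = (V i ∪ I.biUnion V) \ insert k T := by
      grind [disjoint_left]
    refine ⟨insert k T, ?_, ?_, ?_⟩
    · rw [biUnion_insert]
      grind
    · rw [forall_mem_insert]
      refine ⟨⟨k, by grind [disjoint_left]⟩, fun j hj => ?_⟩
      obtain ⟨l, hl⟩ := hT j hj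
      exact ⟨l, by grind [disjoint_left]⟩
    · rwa [biUnion_insert, ← hsdiff, union_comm (V i)]

end IsStable

end Stable

section Charpoly

open Matrix

variable {N : Type*} [Fintype N] [DecidableEq N] {B : Matrix N N ℂ}

/-- The multiaffine characteristic polynomial `det (diagonal X - B)` of a Hermitian matrix `B`,
whose coefficients are principal minors of `-B`. These are real, so that taking real parts only
changes the ring of coefficients. -/
noncomputable def charpoly (B : Matrix N N ℂ) : Multiaffine ℝ N :=
  fun S => ((-B).submatrix (Subtype.val : ↥Sᶜ → N) Subtype.val).det.re

lemma coe_charpoly_apply (hB : B.IsHermitian) (S : Finset N) :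
    (charpoly B S : ℂ) = ((-B).submatrix (Subtype.val : ↥Sᶜ → N) Subtype.val).det := by
  rw [charpoly, ← Complex.conj_eq_iff_re, starRingEnd_apply, ← det_conjTranspose,
    (hB.neg.submatrix _).eq]

lemma eval_pderiv_compl_charpoly (hB : B.IsHermitian) (W : Finset N) (z : N → ℂ) :
    ((charpoly B).pderiv Wᶜ).eval z =
      ((diagonal z - B).submatrix (Subtype.val : W → N) Subtype.val).det := by
  rw [sub_eq_add_neg, det_submatrix_diagonal_add, eval, sum_filter]
  refine sum_congr rfl fun S _ => ?_
  by_cases hS : Disjoint S Wᶜ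
  · rw [pderiv, if_pos hS, if_pos hS, Complex.coe_algebraMap, coe_charpoly_apply hB]
  · rw [pderiv, if_neg hS, if_neg hS, map_zero, zero_mul]

lemma eval_charpoly (hB : B.IsHermitian) (z : N → ℂ) :
    (charpoly B).eval z = (diagonal z - B).det := by
  have h := eval_pderiv_compl_charpoly hB univ z
  rw [compl_univ, pderiv_empty] at h
  rw [h, ← det_submatrix_equiv_self (Equiv.subtypeUnivEquiv mem_univ) (diagonal z - B)]
  rfl

lemma eval_pderiv_charpoly_ne_zero (hB : B.IsHermitian) (U : Finset N) {z : N → ℂ}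
    (hz : ∀ i, 0 < (z i).im) : ((charpoly B).pderiv U).eval z ≠ 0 := by
  obtain ⟨W, rfl⟩ := compl_surjective U
  rw [eval_pderiv_compl_charpoly hB, submatrix_sub, Pi.sub_apply, Pi.sub_apply,
    submatrix_diagonal _ _ Subtype.val_injective]
  exact det_diagonal_sub_ne_zero (hB.submatrix _) fun i => hz i

lemma isStable_charpoly (hB : B.IsHermitian) : (charpoly B).IsStable :=
  fun U _ _ hz => eval_pderiv_charpoly_ne_zero hB U hz

lemma pderiv_charpoly_ne_zero (hB : B.IsHermitian) (U : Finset N) :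
    (charpoly B).pderiv U ≠ 0 := by
  intro h
  refine eval_pderiv_charpoly_ne_zero hB U (z := fun _ => Complex.I) (by simp) ?_
  rw [h, eval_zero]

lemma charpoly_ne_zero (hB : B.IsHermitian) : charpoly B ≠ 0 := by
  simpa using pderiv_charpoly_ne_zero hB ∅

lemma isColoop_charpoly (hB : B.IsHermitian) (k : N) : (charpoly B).IsColoop k :=
  fun U _ => pderiv_charpoly_ne_zero hB (insert k U)

lemma isAboveRoots_charpoly (hB : B.IsHermitian) {a : N → ℝ}
    (ha : (diagonal (fun i => (a i : ℂ)) - B).PosDef) : (charpoly B).IsAboveRoots a := by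
  intro U _
  obtain ⟨W, rfl⟩ := compl_surjective U
  rw [← Complex.zero_lt_real, ← eval_ofReal, eval_pderiv_compl_charpoly hB]
  exact (ha.submatrix Subtype.val_injective).det_pos

lemma eval_pderiv_singleton_charpoly (hB : B.IsHermitian) {z : N → ℂ}
    (hz : IsUnit (diagonal z - B).det) (k : N) :
    ((charpoly B).pderiv {k}).eval z = (charpoly B).eval z * (diagonal z - B)⁻¹ k k := by
  rw [eval_charpoly hB, Matrix.inv_def, Matrix.smul_apply, smul_eq_mul,
    Ring.mul_inverse_cancel_left _ _ hz, adjugate_apply, ← compl_compl ({k} : Finset N),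
    eval_pderiv_compl_charpoly hB, ← det_piecewise_one_eq_submatrix_det]
  congr 1
  ext i j
  by_cases hi : i = k <;> simp [hi, updateRow_apply, one_apply, Pi.single_apply, eq_comm]

lemma eval_pderiv_singleton_charpoly_le (hB : B.PosSemidef) (hB1 : (1 - B).PosSemidef) {b α : ℝ}
    (hb : 1 < b) {k : N} (hk : (B k k).re ≤ α) :
    ((charpoly B).pderiv {k}).eval (fun _ => b) ≤
      (b - 1 + α) / (b * (b - 1)) * (charpoly B).eval fun _ => b := by
  have hH := posDef_smul_one_sub hB1 hb
  have hpos : 0 < (charpoly B).eval fun _ => b :=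
    (isAboveRoots_charpoly hB.isHermitian
      (by rwa [← real_smul_one_eq_diagonal])).eval_pos (charpoly_ne_zero hB.isHermitian)
  have heval : ((charpoly B).pderiv {k}).eval (fun _ => b) =
      (charpoly B).eval (fun _ => b) * ((b • 1 - B)⁻¹ k k).re := by
    have hunit : IsUnit (diagonal (fun _ => (b : ℂ)) - B).det := by
      rw [← real_smul_one_eq_diagonal]
      exact (isUnit_iff_isUnit_det _).1 hH.isUnit
    have h := congrArg Complex.re (eval_pderiv_singleton_charpoly hB.isHermitian hunit k)
    rwa [eval_ofReal _ fun _ => b, eval_ofReal _ fun _ => b, Complex.re_ofReal_mul,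
      Complex.ofReal_re, ← real_smul_one_eq_diagonal] at h
  rw [heval, mul_comm]
  gcongr
  exact (re_inv_smul_one_sub_apply_le hB hB1 hb k).trans (by gcongr)

lemma re_le_of_isAboveRoots_pderiv_charpoly (hB : B.IsHermitian) {T W : Finset N} {x : ℝ}
    (hT : ((charpoly B).pderiv Tᶜ).IsAboveRoots fun _ => x) (hW : W ⊆ T) {z : ℂ}
    (hz : (B.submatrix (Subtype.val : W → N) Subtype.val).charpoly.IsRoot z) : z.re ≤ x := by
  have hWx : ((charpoly B).pderiv Wᶜ).IsAboveRoots fun _ => x := by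
    rw [← pderiv_pderiv_sdiff (compl_subset_compl.2 hW)]
    exact hT.pderiv _
  refine re_le_of_isRoot_charpoly (hB.submatrix _) (fun t ht => ?_) hz
  have hpos := (hWx.mono (b := fun _ => t) fun _ => ht.le).eval_pos
    (pderiv_charpoly_ne_zero hB _)
  have heval := eval_pderiv_compl_charpoly hB W fun _ => (t : ℂ)
  rw [submatrix_sub, Pi.sub_apply, Pi.sub_apply, submatrix_diagonal _ _ Subtype.val_injective,
    Function.comp_def] at heval
  rw [← heval, eval_ofReal _ fun _ => t]
  exact Complex.ofReal_ne_zero.2 hpos.ne'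

lemma exists_transversal_forall_isRoot_re_le {ι : Type*} [Fintype ι]
    (hB : B.PosSemidef) (hB1 : (1 - B).PosSemidef) {α b δ : ℝ} (hα : 0 ≤ α)
    (hdiag : ∀ k, (B k k).re ≤ α) (hb : 1 < b) {V : ι → Finset N} {r : ℕ} (hr : r ≠ 0)
    (hcard : ∀ i, #(V i) = r) (hdisj : Pairwise (Function.onFun Disjoint V))
    (hcover : univ.biUnion V = univ)
    (hδ : (r : ℝ) ^ 2 * δ * ((b - 1 + α) / (b * (b - 1))) ≤ (r - 1) ^ 2) :
    ∃ T : Finset N, (∀ i, ∃ k, V i ∩ T = {k}) ∧ ∀ W ⊆ T, ∀ z,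
      (B.submatrix (Subtype.val : W → N) Subtype.val).charpoly.IsRoot z → z.re ≤ b - δ := by
  have hBh := hB.isHermitian
  have ha : (charpoly B).IsAboveRoots fun _ => b := isAboveRoots_charpoly hBh
    (by rw [← real_smul_one_eq_diagonal]; exact posDef_smul_one_sub hB1 hb)
  have hu : 0 < (b - 1 + α) / (b * (b - 1)) := by
    have := sub_pos.2 hb
    positivity
  obtain ⟨T, -, hT, hTa⟩ := (isStable_charpoly hBh).exists_transversal (I := univ) (V := V)
    (δ := δ) ha (charpoly_ne_zero hBh)
    (fun i _ => card_ne_zero.1 ((hcard i).trans_ne hr)) (fun i _ j _ hij => hdisj hij)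
    (fun _ _ k _ => isColoop_charpoly hBh k) hu
    (fun _ _ k _ => eval_pderiv_singleton_charpoly_le hB hB1 hb (hdiag k))
    fun i _ => by rwa [hcard i]
  refine ⟨T, fun i => hT i (mem_univ i), fun W hW z hz => ?_⟩
  have hshift : shift univ (-δ) (fun _ : N => b) = fun _ => b - δ := by
    ext i
    simp [shift, sub_eq_add_neg]
  rw [hcover, ← compl_eq_univ_sdiff, hshift] at hTa
  exact re_le_of_isAboveRoots_pderiv_charpoly hBh hTa hW hz

end Charpoly

end Multiaffine

section Paving

open Finset Matrix

lemma charpoly_submatrix_blockDiagonal {R m κ : Type*} [CommRing R] [DecidableEq m]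
    [DecidableEq κ] (A : κ → Matrix m m R) (S : Finset m) (k : κ) :
    ((blockDiagonal A).submatrix (Subtype.val : ↥(S ×ˢ {k}) → m × κ) Subtype.val).charpoly =
      ((A k).submatrix (Subtype.val : S → m) Subtype.val).charpoly := by
  let e : ↥(S ×ˢ {k}) ≃ S :=
    { toFun := fun p => ⟨p.1.1, (mem_product.1 p.2).1⟩
      invFun := fun i => ⟨(i, k), by simp⟩
      left_inv := fun p => Subtype.ext (Prod.ext rfl (mem_singleton.1 (mem_product.1 p.2).2).symm)
      right_inv := fun _ => rfl }
  rw [← charpoly_reindex e]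
  congr 1
  ext i j
  simp [e]

/-- With `s = √r` and `b = 1 + s`, this is the condition on `δ = b - (3 / s + α)` under which
`exists_transversal_forall_isRoot_re_le` bounds the roots by `3 / s + α`. -/
lemma paving_estimate {s α : ℝ} (hs : 1 ≤ s) (hα : 0 ≤ α) :
    (s ^ 2) ^ 2 * (1 + s - (3 / s + α)) * ((1 + s - 1 + α) / ((1 + s) * (1 + s - 1))) ≤
      (s ^ 2 - 1) ^ 2 := by
  have hs0 : 0 < s := zero_lt_one.trans_le hs
  rw [add_sub_cancel_left, mul_div_assoc', div_le_iff₀ (by positivity)]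
  have hcubic : 0 ≤ 3 / 4 * s ^ 3 - 2 * s ^ 2 + s + 1 := by
    nlinarith [sq_nonneg (s - 3 / 2)]
  have key : 0 ≤ s ^ 3 * (α - 1 / 2) ^ 2 + 3 * s ^ 2 * α := by positivity
  calc (s ^ 2) ^ 2 * (1 + s - (3 / s + α)) * (s + α)
      = s * (s ^ 2 * (s ^ 2 + s - 3 - α * s) * (s + α)) := by
        field_simp
        ring
    _ ≤ s * ((s ^ 2 - 1) ^ 2 * (1 + s)) := by
        refine mul_le_mul_of_nonneg_left ?_ hs0.le
        linarith
    _ = _ := by ring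

variable {m κ : Type*} [Finite m] [DecidableEq m] [Fintype κ] [Nonempty κ] {A : Matrix m m ℂ}
  {α : ℝ}

lemma exists_transversal_blockDiagonal [DecidableEq κ] (hA : A.PosSemidef)
    (hAc : (1 - A).PosSemidef) (hα : 0 ≤ α) (hdiag : ∀ i, (A i i).re ≤ α) :
    ∃ T : Finset (m × κ), (∀ i, ∃ p, ({i} ×ˢ univ) ∩ T = {p}) ∧
      ∀ W ⊆ T, ∀ z, ((blockDiagonal fun _ : κ => A).submatrix (Subtype.val : W → m × κ)
        Subtype.val).charpoly.IsRoot z → z.re ≤ 3 / √(Fintype.card κ) + α := by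
  cases nonempty_fintype m
  have hs : 1 ≤ √(Fintype.card κ) := Real.one_le_sqrt.2 (Nat.one_le_cast.2 Fintype.card_pos)
  have hsq : (√(Fintype.card κ)) ^ 2 = Fintype.card κ := Real.sq_sqrt (Nat.cast_nonneg _)
  have hestimate := paving_estimate hs hα
  rw [hsq] at hestimate
  have hB1 : (1 - blockDiagonal fun _ : κ => A).PosSemidef := by
    rw [← blockDiagonal_one, ← blockDiagonal_sub]
    exact posSemidef_blockDiagonal fun _ => hAc
  have h := Multiaffine.exists_transversal_forall_isRoot_re_le
    (V := fun i : m => {i} ×ˢ (univ : Finset κ)) (posSemidef_blockDiagonal fun _ => hA) hB1 hα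
    (fun p => by simpa [blockDiagonal_apply] using hdiag p.1) (by linarith) Fintype.card_ne_zero
    (fun i => by simp) (fun i j hij => disjoint_product.2 (.inl (disjoint_singleton.2 hij)))
    (by ext p; simp) hestimate
  simpa only [sub_sub_cancel] using h

theorem paving_bound_general (hA : A.PosSemidef) (hAc : (1 - A).PosSemidef) (hα : 0 ≤ α)
    (hdiag : ∀ i, (A i i).re ≤ α) :
    ∃ S : κ → Finset m, Pairwise (Function.onFun Disjoint S) ∧ (∀ i, ∃ k, i ∈ S k) ∧
      ∀ k z, (A.submatrix (Subtype.val : S k → m) Subtype.val).charpoly.IsRoot z →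
        z.re ≤ 3 / √(Fintype.card κ) + α := by
  classical
  cases nonempty_fintype m
  obtain ⟨T, hT, hroot⟩ := exists_transversal_blockDiagonal (κ := κ) hA hAc hα hdiag
  have hTunique (i : m) : ∃! k, (i, k) ∈ T := by
    obtain ⟨⟨j, k⟩, hp⟩ := hT i
    simp only [Finset.ext_iff, mem_inter, mem_product, mem_univ, mem_singleton, and_true,
      Prod.forall, Prod.mk.injEq] at hp
    obtain ⟨rfl, hk⟩ := (hp j k).2 ⟨rfl, rfl⟩
    exact ⟨k, hk, fun l hl => ((hp j l).1 ⟨rfl, hl⟩).2⟩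
  refine ⟨fun k => {i | (i, k) ∈ T}, fun k l hkl => ?_, fun i => ?_, fun k z hz => ?_⟩
  · refine disjoint_left.2 fun i hik hil => hkl ?_
    exact (hTunique i).unique (mem_filter.1 hik).2 (mem_filter.1 hil).2
  · simpa using (hTunique i).exists
  · rw [← charpoly_submatrix_blockDiagonal (fun _ : κ => A) _ k] at hz
    refine hroot _ (fun p hp => ?_) z hz
    obtain ⟨hp1, hp2⟩ := mem_product.1 hp
    simpa only [← mem_singleton.1 hp2] using (mem_filter.1 hp1).2

lemma three_div_sqrt_le {r : ℝ} (hr : 1 ≤ r) : 3 / √r ≤ 4 * r ^ (-(1 : ℝ) / 4) := by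
  have hr0 : 0 ≤ r := zero_le_one.trans hr
  have hpow : r ^ (-(1 : ℝ) / 2) ≤ r ^ (-(1 : ℝ) / 4) :=
    Real.rpow_le_rpow_of_exponent_le hr (by norm_num)
  rw [Real.sqrt_eq_rpow, div_eq_mul_inv, ← Real.rpow_neg hr0, ← neg_div]
  linarith [Real.rpow_nonneg hr0 (-(1 : ℝ) / 4)]

end Paving

/-- **Paving bound.** Every PSD contraction with diagonal entries at most `α` has an
`r`-paving all of whose blocks have largest eigenvalue at most `4·r^{-1/4} + α`. -/
theorem paving_bound {n : ℕ} (A : Matrix (Fin n) (Fin n) ℂ)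
    (hA : A.PosSemidef) (hAc : (1 - A).PosSemidef)
    (α : ℝ) (hα : 0 ≤ α) (hdiag : ∀ i, (A i i).re ≤ α)
    (r : ℕ) (hr : 1 ≤ r) :
    ∃ S : Fin r → Finset (Fin n),
      (∀ k l, k ≠ l → Disjoint (S k) (S l)) ∧
      (∀ i : Fin n, ∃ k, i ∈ S k) ∧
      ∀ k, ∀ z : ℂ, ((subMat A (S k)).charpoly).IsRoot z →
        z.re ≤ 4 * (r : ℝ) ^ (-(1 : ℝ) / 4) + α := by
  have : Nonempty (Fin r) := ⟨⟨0, hr⟩⟩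
  obtain ⟨S, hdisj, hcover, hroot⟩ := paving_bound_general (κ := Fin r) hA hAc hα hdiag
  refine ⟨S, fun k l hkl => hdisj hkl, hcover, fun k z hz => (hroot k z hz).trans ?_⟩
  rw [Fintype.card_fin]
  gcongr
  exact three_div_sqrt_le (Nat.one_le_cast.2 hr)
end

section
/- Let r ≥ 2 and m, n ≥ 1 be integers, and let A_1,…,A_m ∈ M_n(ℂ) be positive semidefinite matrices with A_1 + ⋯ + A_m = I_n and Trace(A_i) ≤ ε for every i ∈ [m], where 0 < ε ≤ (1 − 1/√r)². Define the univariate polynomial p(x) = [ ∏_{i=1}^{m} (1 − ∂/∂z_i) ] det( z_1 A_1 + ⋯ + z_m A_m )^{r} evaluated at z_1 = ⋯ = z_m = x. Then p(x) ≠ 0 for every real x ≥ (1 + √(2r)·ε^{1/4})²; in particular every real root of p is strictly less than (1 + √(2r)·ε^{1/4})². -/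
open ComplexOrder

/-- the matrix `z₁A₁ + ⋯ + z_mA_m` with polynomial entries -/
noncomputable def mixedMat {m n : ℕ} (A : Fin m → Matrix (Fin n) (Fin n) ℂ) :
    Matrix (Fin n) (Fin n) (MvPolynomial (Fin m) ℂ) :=
  ∑ i : Fin m, (MvPolynomial.X i : MvPolynomial (Fin m) ℂ) • (A i).map (MvPolynomial.C : ℂ →+* MvPolynomial (Fin m) ℂ)

/-- `[∏ᵢ (1 - ∂/∂zᵢ)] det(z₁A₁+⋯+z_mA_m)^r` -/
noncomputable def mixedCharMv {m n : ℕ} (A : Fin m → Matrix (Fin n) (Fin n) ℂ) (r : ℕ) :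
    MvPolynomial (Fin m) ℂ :=
  (List.finRange m).foldr (fun i g => g - MvPolynomial.pderiv i g) ((mixedMat A).det ^ r)

/-!
The barrier `∂ⱼP / P` of a real stable polynomial, restricted to a line in a nonnegative direction,
is a rational function of nonpositive imaginary part on the upper half plane. Its partial fraction
expansion is therefore `c + ∑ w / (t - s)` with `w > 0`, the sum being over poles `s` to the left of
the points considered, and so it is decreasing and convex there. Applying `1 - ∂ᵢ` replaces
`Φⱼ` by `Φⱼ - ∂ᵢΦⱼ / (1 - Φᵢ)`; when `Φᵢ ≤ 1 - 1 / δ`, convexity shows that moving the base point by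
`δ` in direction `i` compensates the increase.

For `P = det(∑ zᵢ Aᵢ) ^ r` the barriers at `t (1, …, 1)` are `r tr Aⱼ / t ≤ r ε / t`, so the final
polynomial has no zero above `(t + δ)(1, …, 1)` as soon as `r ε / t ≤ 1 - 1 / δ`. Optimising over
`t` and `δ` gives `(1 + √(r ε))²`, which is at most `(1 + √(2r) ε^{1/4})²` because `ε ≤ 1`.
-/

open Filter Polynomial Set Topology

section LocalAnalysis

variable {h : ℂ → ℂ} {x w : ℝ}

/-- Approach `x` along the ray of angle `θ`. -/
theorem mul_sin_nonpos_of_im_mul_zpow_nonpos {k : ℤ} (hc : ContinuousAt h x) (hw : h x = w)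
    (him : ∀ z : ℂ, 0 < z.im → (h z * (z - x) ^ k).im ≤ 0) {θ : ℝ} (hθ : θ ∈ Ioo 0 Real.pi) :
    w * Real.sin (k * θ) ≤ 0 := by
  set e : ℂ := Complex.exp (θ * Complex.I) with he
  have he_im : 0 < e.im := by
    rw [he, Complex.exp_ofReal_mul_I_im]
    exact Real.sin_pos_of_mem_Ioo hθ
  have hray : Tendsto (fun ρ : ℝ => (x + ρ * e : ℂ)) (𝓝[>] 0) (𝓝 x) :=
    tendsto_nhdsWithin_of_tendsto_nhds (Continuous.tendsto' (by fun_prop) _ _ (by simp))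
  have hlim : Tendsto (fun ρ : ℝ => (h (x + ρ * e) * e ^ k).im) (𝓝[>] 0) (𝓝 (w * e ^ k).im) :=
    hw ▸ (Complex.continuous_im.tendsto _).comp ((hc.tendsto.comp hray).mul_const _)
  have hray_im : ∀ᶠ ρ : ℝ in 𝓝[>] 0, (h (x + ρ * e) * e ^ k).im ≤ 0 := by
    filter_upwards [self_mem_nhdsWithin] with ρ (hρ : 0 < ρ)
    have hz := him (x + ρ * e) (by simpa using mul_pos hρ he_im)
    rw [add_sub_cancel_left, mul_zpow, mul_left_comm, ← Complex.ofReal_zpow,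
      Complex.im_ofReal_mul] at hz
    exact nonpos_of_mul_nonpos_right hz (zpow_pos hρ k)
  have hexp : e ^ k = Complex.exp ((k * θ : ℝ) * Complex.I) := by
    rw [he, ← Complex.exp_int_mul]
    push_cast
    ring_nf
  have hle := le_of_tendsto hlim hray_im
  rwa [hexp, Complex.im_ofReal_mul, Complex.exp_ofReal_mul_I_im] at hle

theorem nonpos_of_hasDerivAt_of_im_nonpos {d : ℝ} (hd : HasDerivAt h d x) (hw : h x = w)
    (him : ∀ z : ℂ, 0 < z.im → (h z).im ≤ 0) : d ≤ 0 := by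
  have hslope : ∀ z : ℂ, 0 < z.im → (dslope h x z * (z - x) ^ (1 : ℤ)).im ≤ 0 := by
    intro z hz
    rw [zpow_one, mul_comm, ← smul_eq_mul, sub_smul_dslope, hw, Complex.sub_im,
      Complex.ofReal_im, sub_zero]
    exact him z hz
  simpa using mul_sin_nonpos_of_im_mul_zpow_nonpos
    (continuousAt_dslope_same.2 hd.differentiableAt) (by rw [dslope_same, hd.deriv]) hslope
    (θ := Real.pi / 2) ⟨by positivity, half_lt_self Real.pi_pos⟩

theorem eq_one_and_pos_of_im_div_pow_nonpos {m : ℕ} (hc : ContinuousAt h x) (hw : h x = w)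
    (hw₀ : w ≠ 0) (hm : m ≠ 0) (him : ∀ z : ℂ, 0 < z.im → (h z / (z - x) ^ m).im ≤ 0) :
    m = 1 ∧ 0 < w := by
  have hπ := Real.pi_pos
  have hm₀ : (0 : ℝ) < m := by positivity
  have hsin {φ : ℝ} (hφ₀ : 0 < φ) (hφ : φ < m * Real.pi) : 0 ≤ w * Real.sin φ := by
    have hsin_neg := mul_sin_nonpos_of_im_mul_zpow_nonpos (k := -m) hc hw
      (by simpa only [zpow_neg, zpow_natCast, ← div_eq_mul_inv] using him)
      (θ := φ / m) ⟨by positivity, by rwa [div_lt_iff₀' hm₀]⟩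
    have harg : ((-m : ℤ) : ℝ) * (φ / m) = -φ := by
      push_cast
      field_simp
    rwa [harg, Real.sin_neg, mul_neg, neg_nonpos] at hsin_neg
  have hm₁ : (1 : ℝ) ≤ m := mod_cast Nat.one_le_iff_ne_zero.2 hm
  have hw_nonneg : 0 ≤ w := by
    simpa using hsin (φ := Real.pi / 2) (by positivity) (by nlinarith)
  refine ⟨?_, hw_nonneg.lt_of_ne' hw₀⟩
  by_contra hne
  have hm₂ : (2 : ℝ) ≤ m := mod_cast (by omega : 2 ≤ m)
  have hw_nonpos := hsin (φ := Real.pi / 2 + Real.pi) (by positivity) (by nlinarith)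
  rw [Real.sin_add_pi, Real.sin_pi_div_two] at hw_nonpos
  exact hw₀ (by linarith)

end LocalAnalysis

section RationalFunction

theorem aeval_ofReal (F : ℝ[X]) (x : ℝ) : aeval (x : ℂ) F = (F.eval x : ℝ) :=
  aeval_algebraMap_apply_eq_algebraMap_eval x F

theorem splits_of_aeval_ne_zero_of_im_pos {F : ℝ[X]} (hF : ∀ z : ℂ, 0 < z.im → aeval z F ≠ 0) :
    F.Splits := by
  refine Splits.of_splits_map (algebraMap ℝ ℂ) (IsAlgClosed.splits _) fun z hz => ?_
  have hroot : aeval z F = 0 := (mem_aroots'.1 hz).2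
  have him : z.im = 0 := by
    rcases lt_trichotomy z.im 0 with hneg | hzero | hpos
    · exact absurd (by rw [aeval_conj, hroot, map_zero])
        (hF (starRingEnd ℂ z) (by simpa using hneg))
    · exact hzero
    · exact absurd hroot (hF z hpos)
  exact ⟨z.re, Complex.ext rfl him.symm⟩

/-- Since `a / 0 = 0`, the conclusion contains the simplicity of the root `x` of `F`. -/
theorem residue_pos {F G : ℝ[X]} {x : ℝ} (hF : F ≠ 0) (hFx : F.eval x = 0) (hGx : G.eval x ≠ 0)
    (him : ∀ z : ℂ, 0 < z.im → (aeval z G / aeval z F).im ≤ 0) :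
    0 < G.eval x / F.derivative.eval x := by
  obtain ⟨H, hFH, hHdvd⟩ := exists_eq_pow_rootMultiplicity_mul_and_not_dvd F hF x
  have hHx : H.eval x ≠ 0 := fun h => hHdvd (dvd_iff_isRoot.2 h)
  set m := F.rootMultiplicity x
  have hm : m ≠ 0 := (rootMultiplicity_pos hF).2 hFx |>.ne'
  have haeval (z : ℂ) : aeval z F = (z - x) ^ m * aeval z H := by
    conv_lhs => rw [hFH]
    simp
  obtain ⟨hm₁, hpos⟩ := eq_one_and_pos_of_im_div_pow_nonpos (m := m)
    (h := fun z => aeval z G / aeval z H) (w := G.eval x / H.eval x)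
    ((Polynomial.continuous_aeval G).continuousAt.div
      (Polynomial.continuous_aeval H).continuousAt (by simpa [aeval_ofReal] using hHx))
    (by simp [aeval_ofReal]) (div_ne_zero hGx hHx) hm
    (fun z hz => by simpa only [haeval, div_div, mul_comm] using him z hz)
  have hderiv : F.derivative.eval x = H.eval x := by
    rw [hFH, hm₁]
    simp
  rwa [hderiv]

theorem nodup_roots_of_eval_derivative_ne_zero {R : Type*} [CommRing R] [IsDomain R] {F : R[X]}
    (hF : ∀ x, F.eval x = 0 → F.derivative.eval x ≠ 0) : F.roots.Nodup := by
  classical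
  refine Multiset.nodup_iff_count_le_one.2 fun x => not_lt.1 fun hx => ?_
  rw [count_roots] at hx
  have hF₀ : F ≠ 0 := by
    rintro rfl
    simp at hx
  have hroots := (one_lt_rootMultiplicity_iff_isRoot hF₀).1 hx
  exact hF x hroots.1 hroots.2

theorem aeval_div_aeval_eq_sum {K L : Type*} [Field K] [DecidableEq K] [Field L] [Algebra K L]
    {F G : K[X]} (hF : F.Splits) (hroots : F.roots.Nodup) (hdeg : G.degree < F.degree) {z : L}
    (hz : aeval z F ≠ 0) :
    aeval z G / aeval z F = ∑ x ∈ F.roots.toFinset,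
      algebraMap K L (G.eval x / F.derivative.eval x) / (z - algebraMap K L x) := by
  set s := F.roots.toFinset with hs
  have hFs : F = C F.leadingCoeff * Lagrange.nodal s id := by
    conv_lhs => rw [hF.eq_prod_roots]
    rw [Lagrange.nodal, Finset.prod, hs, Multiset.toFinset_val, hroots.dedup]
    rfl
  have hcard : G.degree < s.card := by
    rwa [hs, Multiset.toFinset_card_of_nodup hroots, ← hF.degree_eq_card_roots
      (by rintro rfl; simp at hz)]
  have hG : G = ∑ x ∈ s, C (G.eval x * Lagrange.nodalWeight s id x) *
      Lagrange.nodal (s.erase x) id := by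
    conv_lhs => rw [Lagrange.eq_interpolate (injOn_id _) hcard,
      Lagrange.interpolate_eq_nodalWeight_mul_nodal_div_X_sub_C]
    refine Finset.sum_congr rfl fun x hx => ?_
    rw [Lagrange.nodal_erase_eq_nodal_div hx, map_mul]
    simp only [id]
    ring
  conv_lhs => enter [1]; rw [hG]
  rw [map_sum, Finset.sum_div]
  refine Finset.sum_congr rfl fun x hx => ?_
  have hweight : F.derivative.eval x = F.leadingCoeff * (Lagrange.nodalWeight s id x)⁻¹ := by
    rw [Lagrange.nodalWeight_eq_eval_derivative_nodal hx, inv_inv]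
    conv_lhs => rw [hFs, derivative_C_mul, eval_C_mul]
    rfl
  have haeval : aeval z F = algebraMap K L F.leadingCoeff * ((z - algebraMap K L x) *
      aeval z (Lagrange.nodal (s.erase x) id)) := by
    conv_lhs => rw [hFs, Lagrange.nodal_eq_mul_nodal_erase hx]
    simp
  rw [hweight, haeval]
  rw [haeval] at hz
  have hsub := left_ne_zero_of_mul (right_ne_zero_of_mul hz)
  have hnodal := right_ne_zero_of_mul (right_ne_zero_of_mul hz)
  have hlead := left_ne_zero_of_mul hz
  simp only [map_mul, map_div₀, map_inv₀, aeval_C]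
  field_simp

end RationalFunction

section Stieltjes

/-- The rational function `G / F` is a Stieltjes function on `[a, ∞)`: it has no poles in the
upper half plane `ℍ` or on `[a, ∞)`, maps `ℍ` into the closed lower half plane, and is
nonnegative on `[a, ∞)`. The fraction is not required to be reduced, but the pole conditions
are imposed on `F` itself. -/
structure IsStieltjes (G F : ℝ[X]) (a : ℝ) : Prop where
  aeval_ne_zero : ∀ z : ℂ, 0 < z.im → aeval z F ≠ 0
  eval_ne_zero : ∀ t : ℝ, a ≤ t → F.eval t ≠ 0
  im_nonpos : ∀ z : ℂ, 0 < z.im → (aeval z G / aeval z F).im ≤ 0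
  nonneg : ∀ t : ℝ, a ≤ t → 0 ≤ G.eval t / F.eval t

namespace IsStieltjes

variable {F G : ℝ[X]} {a : ℝ}

theorem ne_zero (h : IsStieltjes G F a) : F ≠ 0 := by
  rintro rfl
  exact h.eval_ne_zero a le_rfl eval_zero

theorem of_mul_left {d : ℝ[X]} (h : IsStieltjes (d * G) (d * F) a) : IsStieltjes G F a where
  aeval_ne_zero z hz := right_ne_zero_of_mul (map_mul (aeval z) d F ▸ h.aeval_ne_zero z hz)
  eval_ne_zero t ht := right_ne_zero_of_mul (eval_mul (R := ℝ) ▸ h.eval_ne_zero t ht)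
  im_nonpos z hz := by
    have hF := h.aeval_ne_zero z hz
    rw [map_mul] at hF
    simpa only [map_mul, mul_div_mul_left _ _ (left_ne_zero_of_mul hF)] using h.im_nonpos z hz
  nonneg t ht := by
    have hF := h.eval_ne_zero t ht
    rw [eval_mul] at hF
    simpa only [eval_mul, mul_div_mul_left _ _ (left_ne_zero_of_mul hF)] using h.nonneg t ht

theorem antitoneOn (h : IsStieltjes G F a) :
    AntitoneOn (fun t => G.eval t / F.eval t) (Ici a) := by
  have hreal (t : ℝ) (ht : a ≤ t) : HasDerivAt (fun t => G.eval t / F.eval t) _ t :=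
    (G.hasDerivAt t).div (F.hasDerivAt t) (h.eval_ne_zero t ht)
  refine antitoneOn_of_deriv_nonpos (convex_Ici a)
    (fun t ht => (hreal t ht).continuousAt.continuousWithinAt)
    (fun t ht => (hreal t (interior_subset ht)).differentiableAt.differentiableWithinAt)
    fun t ht => ?_
  have ht' : a ≤ t := interior_subset ht
  have hcomplex : HasDerivAt (fun z => aeval z G / aeval z F) _ (t : ℂ) :=
    (G.hasDerivAt_aeval (t : ℂ)).div (F.hasDerivAt_aeval (t : ℂ))
      (by simpa [aeval_ofReal] using h.eval_ne_zero t ht')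
  rw [(hreal t ht').deriv]
  refine nonpos_of_hasDerivAt_of_im_nonpos (h := fun z => aeval z G / aeval z F) (x := t)
    (w := G.eval t / F.eval t) ?_ (by simp [aeval_ofReal]) h.im_nonpos
  push_cast
  simpa only [aeval_ofReal] using hcomplex

theorem degree_le (h : IsStieltjes G F a) : G.degree ≤ F.degree := by
  by_contra! hdeg
  have hunbounded := abs_div_tendsto_atTop_atTop_of_degree_gt G F hdeg h.ne_zero
  obtain ⟨t, ht, hat⟩ := ((hunbounded.eventually_gt_atTop (G.eval a / F.eval a)).and
    (eventually_ge_atTop a)).exists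
  rw [abs_of_nonneg (h.nonneg t hat)] at ht
  exact ht.not_ge (h.antitoneOn self_mem_Ici hat hat)

end IsStieltjes

theorem exists_degree_sub_C_mul_lt {K : Type*} [Field K] {F G : K[X]} (hF : F ≠ 0)
    (hdeg : G.degree ≤ F.degree) : ∃ c, (G - C c * F).degree < F.degree := by
  refine ⟨G.coeff F.natDegree / F.leadingCoeff, ?_⟩
  rw [degree_eq_natDegree hF, degree_lt_iff_coeff_zero]
  intro k hk
  rw [coeff_sub, coeff_C_mul]
  rcases hk.eq_or_lt with rfl | hlt
  · rw [coeff_natDegree, div_mul_cancel₀ _ (leadingCoeff_ne_zero.2 hF), sub_self]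
  · have hFk := degree_le_natDegree.trans_lt (Nat.cast_lt.2 hlt)
    rw [coeff_eq_zero_of_degree_lt hFk, coeff_eq_zero_of_degree_lt (hdeg.trans_lt hFk), mul_zero,
      sub_zero]

theorem convexOn_div_sub {a x w : ℝ} (hw : 0 ≤ w) (hx : x < a) :
    ConvexOn ℝ (Ici a) fun t => w / (t - x) := by
  have hinv : ConvexOn ℝ (Ici a) fun t => (t - x) ^ (-1 : ℤ) :=
    ((convexOn_zpow (-1)).translate_left (-x)).subset
      (fun t (ht : a ≤ t) => show 0 < -x + t by linarith) (convex_Ici a)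
  simpa only [zpow_neg_one, smul_eq_mul, ← div_eq_mul_inv] using hinv.smul hw

theorem convexOn_finsetSum {ι E : Type*} [AddCommMonoid E] [Module ℝ E] {u : Set E}
    (hu : Convex ℝ u) {f : ι → E → ℝ} {s : Finset ι} (hf : ∀ i ∈ s, ConvexOn ℝ u (f i)) :
    ConvexOn ℝ u fun t => ∑ i ∈ s, f i t := by
  rw [← Finset.sum_fn]
  exact Finset.sum_induction f (ConvexOn ℝ u) (fun _ _ => .add) (convexOn_const 0 hu) hf

namespace IsStieltjes

variable {F G : ℝ[X]} {a : ℝ}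

theorem exists_eq_add_sum_of_isCoprime (h : IsStieltjes G F a) (hFG : IsCoprime F G) :
    ∃ (c : ℝ) (s : Finset ℝ) (w : ℝ → ℝ), (∀ x ∈ s, 0 < w x ∧ x < a) ∧
      ∀ z : ℂ, aeval z F ≠ 0 → aeval z G / aeval z F = c + ∑ x ∈ s, (w x / (z - x) : ℂ) := by
  obtain ⟨c, hdeg⟩ := exists_degree_sub_C_mul_lt h.ne_zero h.degree_le
  set R := G - C c * F with hR
  have hdiv {z : ℂ} (hz : aeval z F ≠ 0) :
      aeval z R / aeval z F = aeval z G / aeval z F - c := by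
    rw [hR, map_sub, map_mul, aeval_C, sub_div, mul_div_cancel_right₀ _ hz]
    rfl
  have him (z : ℂ) (hz : 0 < z.im) : (aeval z R / aeval z F).im ≤ 0 := by
    rw [hdiv (h.aeval_ne_zero z hz), Complex.sub_im, Complex.ofReal_im, sub_zero]
    exact h.im_nonpos z hz
  have hres (x : ℝ) (hx : F.eval x = 0) : 0 < R.eval x / F.derivative.eval x := by
    refine residue_pos h.ne_zero hx (fun hRx => ?_) him
    have hGx : G.eval x = 0 := by simpa [hR, hx] using hRx
    exact not_isUnit_X_sub_C x (hFG.isUnit_of_dvd' (dvd_iff_isRoot.2 hx) (dvd_iff_isRoot.2 hGx))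
  have hnodup := nodup_roots_of_eval_derivative_ne_zero fun x hx h0 =>
    (hres x hx).ne' (by rw [h0, div_zero])
  refine ⟨c, F.roots.toFinset, fun x => R.eval x / F.derivative.eval x, fun x hx => ?_,
    fun z hz => ?_⟩
  · have hFx : F.eval x = 0 := (mem_roots'.1 (Multiset.mem_toFinset.1 hx)).2
    exact ⟨hres x hFx, not_le.1 fun hax => h.eval_ne_zero x hax hFx⟩
  · rw [← sub_eq_iff_eq_add', ← hdiv hz]
    exact aeval_div_aeval_eq_sum (splits_of_aeval_ne_zero_of_im_pos h.aeval_ne_zero) hnodup hdeg hz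

theorem exists_eq_add_sum (h : IsStieltjes G F a) :
    ∃ (c : ℝ) (s : Finset ℝ) (w : ℝ → ℝ), (∀ x ∈ s, 0 < w x ∧ x < a) ∧
      ∀ z : ℂ, aeval z F ≠ 0 → aeval z G / aeval z F = c + ∑ x ∈ s, (w x / (z - x) : ℂ) := by
  obtain ⟨F', G', d, hrel, rfl, rfl⟩ :=
    UniqueFactorizationMonoid.exists_reduced_factors F h.ne_zero G
  obtain ⟨c, s, w, hw, hsum⟩ := h.of_mul_left.exists_eq_add_sum_of_isCoprime hrel.isCoprime
  refine ⟨c, s, w, hw, fun z hz => ?_⟩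
  rw [map_mul] at hz
  rw [map_mul, map_mul, mul_div_mul_left _ _ (left_ne_zero_of_mul hz)]
  exact hsum z (right_ne_zero_of_mul hz)

theorem convexOn (h : IsStieltjes G F a) : ConvexOn ℝ (Ici a) fun t => G.eval t / F.eval t := by
  obtain ⟨c, s, w, hw, hsum⟩ := h.exists_eq_add_sum
  have hconv : ConvexOn ℝ (Ici a) fun t => c + ∑ x ∈ s, w x / (t - x) :=
    (convexOn_const c (convex_Ici a)).add <| convexOn_finsetSum (convex_Ici a) fun x hx =>
      convexOn_div_sub (hw x hx).1.le (hw x hx).2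
  refine hconv.congr fun t ht => ?_
  have ht' := hsum t (by simpa [aeval_ofReal] using h.eval_ne_zero t ht)
  rw [aeval_ofReal, aeval_ofReal] at ht'
  exact_mod_cast ht'.symm

/-- A function `c + ∑ wₓ / (z - x)` with `wₓ > 0` is real at a point of `ℍ` only if the sum is
empty. -/
theorem eval_div_eval_eq_of_im_eq_zero (h : IsStieltjes G F a) {z : ℂ} (hz : 0 < z.im)
    (him : (aeval z G / aeval z F).im = 0) {t : ℝ} (ht : a ≤ t) :
    ((G.eval t / F.eval t : ℝ) : ℂ) = aeval z G / aeval z F := by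
  obtain ⟨c, s, w, hw, hsum⟩ := h.exists_eq_add_sum
  have hs : s = ∅ := by
    by_contra! hne
    refine him.not_lt ?_
    rw [hsum z (h.aeval_ne_zero z hz), Complex.add_im, Complex.ofReal_im, zero_add,
      Complex.im_sum]
    refine Finset.sum_neg (fun x hx => ?_) hne
    rw [div_eq_mul_inv, Complex.im_ofReal_mul, Complex.inv_im, Complex.sub_im, Complex.ofReal_im,
      sub_zero]
    have hzx : z - x ≠ 0 := fun h0 => hz.ne' (by simpa using congrArg Complex.im h0)
    exact mul_neg_of_pos_of_neg (hw x hx).1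
      (div_neg_of_neg_of_pos (neg_lt_zero.2 hz) (Complex.normSq_pos.2 hzx))
  have ht' := hsum t (by simpa [aeval_ofReal] using h.eval_ne_zero t ht)
  rw [hsum z (h.aeval_ne_zero z hz), hs, Finset.sum_empty]
  rw [hs, Finset.sum_empty, aeval_ofReal, aeval_ofReal] at ht'
  exact_mod_cast ht'

end IsStieltjes

end Stieltjes

section LogarithmicDerivative

theorem im_eval_derivative_div_eval_nonpos {q : ℂ[X]} {z : ℂ} (hz : q.eval z ≠ 0)
    (hroots : ∀ ζ, q.eval ζ = 0 → ζ.im ≤ z.im) :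
    (q.derivative.eval z / q.eval z).im ≤ 0 := by
  rw [(IsAlgClosed.splits q).eval_derivative_div_eval_of_ne_zero hz]
  change Complex.imAddGroupHom _ ≤ 0
  rw [map_multiset_sum, Multiset.map_map]
  refine (Multiset.sum_le_card_nsmul _ 0 fun y hy => ?_).trans_eq (nsmul_zero _)
  obtain ⟨ζ, hζ, rfl⟩ := Multiset.mem_map.1 hy
  have him := hroots ζ (mem_roots'.1 hζ).2
  rw [Function.comp_apply, Complex.coe_imAddGroupHom, one_div, Complex.inv_im, Complex.sub_im]
  exact div_nonpos_of_nonpos_of_nonneg (by linarith) (Complex.normSq_nonneg _)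

theorem eval_derivative_div_eval_nonneg {q : ℝ[X]} {t : ℝ}
    (hq : ∀ z : ℂ, 0 < z.im → aeval z q ≠ 0) (ht : ∀ s, t ≤ s → q.eval s ≠ 0) :
    0 ≤ q.derivative.eval t / q.eval t := by
  rw [(splits_of_aeval_ne_zero_of_im_pos hq).eval_derivative_div_eval_of_ne_zero (ht t le_rfl)]
  refine Multiset.sum_nonneg fun y hy => ?_
  obtain ⟨ζ, hζ, rfl⟩ := Multiset.mem_map.1 hy
  have hlt : ζ < t := not_le.1 fun hle => ht ζ hle (mem_roots'.1 hζ).2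
  exact one_div_nonneg.2 (sub_nonneg.2 hlt.le)

end LogarithmicDerivative

section RestrictLine

variable {σ K : Type*} [CommRing K]

/-- The restriction `t ↦ P (x + t v)` of a multivariate polynomial to a line. -/
noncomputable def restrictLine (P : MvPolynomial σ K) (x v : σ → K) : K[X] :=
  MvPolynomial.aeval (fun j => C (x j) + C (v j) * X) P

theorem aeval_restrictLine {L : Type*} [CommRing L] [Algebra K L] (P : MvPolynomial σ K)
    (x v : σ → K) (t : L) : aeval t (restrictLine P x v) =
      MvPolynomial.aeval (fun j => algebraMap K L (x j) + t * algebraMap K L (v j)) P := by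
  rw [restrictLine, ← AlgHom.comp_apply, MvPolynomial.comp_aeval]
  simp [mul_comm t]

theorem eval_restrictLine (P : MvPolynomial σ K) (x v : σ → K) (t : K) :
    (restrictLine P x v).eval t = MvPolynomial.eval (x + t • v) P :=
  aeval_restrictLine P x v t

theorem derivative_restrictLine_single [DecidableEq σ] (P : MvPolynomial σ K) (x : σ → K) (i : σ) :
    (restrictLine P x (Pi.single i 1)).derivative =
      restrictLine (MvPolynomial.pderiv i P) x (Pi.single i 1) := by
  unfold restrictLine
  induction P using MvPolynomial.induction_on with
  | C a => simp
  | add p q hp hq => simp [hp, hq]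
  | mul_X p j hp =>
    rw [Derivation.leibniz, map_mul, derivative_mul, hp, MvPolynomial.pderiv_X, map_add,
      smul_eq_mul, smul_eq_mul, map_mul, map_mul, MvPolynomial.aeval_X]
    obtain rfl | hji := eq_or_ne j i
    · simp
      ring
    · simp [hji]
      ring

theorem pderiv_comm (i j : σ) (P : MvPolynomial σ K) :
    MvPolynomial.pderiv i (MvPolynomial.pderiv j P) =
      MvPolynomial.pderiv j (MvPolynomial.pderiv i P) := by
  classical
  have hcomm : ⁅MvPolynomial.pderiv (R := K) i, MvPolynomial.pderiv (R := K) j⁆ = 0 := by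
    ext k
    simp [Derivation.commutator_apply, MvPolynomial.pderiv_X, Pi.single_apply, apply_ite]
  rw [← sub_eq_zero, ← Derivation.commutator_apply, hcomm, Derivation.zero_apply]

theorem mvAeval_ofReal (P : MvPolynomial σ ℝ) (x : σ → ℝ) :
    MvPolynomial.aeval (fun i => (x i : ℂ)) P = (MvPolynomial.eval x P : ℝ) :=
  MvPolynomial.aeval_algebraMap_apply ℂ x P

theorem ofReal_eval_eq_eval_map (P : MvPolynomial σ ℝ) (x : σ → ℝ) :
    (MvPolynomial.eval x P : ℂ) =
      MvPolynomial.eval (fun i => (x i : ℂ)) (MvPolynomial.map (algebraMap ℝ ℂ) P) := by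
  rw [MvPolynomial.eval_map, ← MvPolynomial.aeval_def, mvAeval_ofReal]

end RestrictLine

/-- The union of the open upper half plane and the real half-line `[a, ∞)`. -/
def upperUnionIci (a : ℝ) : Set ℂ := {z | 0 < z.im ∨ z.im = 0 ∧ a ≤ z.re}

section UpperUnionIci

variable {a : ℝ} {z : ℂ}

theorem im_nonneg_of_mem_upperUnionIci (hz : z ∈ upperUnionIci a) : 0 ≤ z.im :=
  hz.elim le_of_lt fun h => h.1.ge

theorem upperUnionIci_antitone : Antitone upperUnionIci :=
  fun _ _ hab _ hz => hz.imp_right fun h => ⟨h.1, hab.trans h.2⟩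

theorem ofReal_mem_upperUnionIci {x : ℝ} (hx : a ≤ x) : (x : ℂ) ∈ upperUnionIci a :=
  Or.inr ⟨Complex.ofReal_im x, hx⟩

theorem ofReal_add_mul_ofReal_mem_upperUnionIci {x v c : ℝ} (hv : 0 ≤ v) (hx : a ≤ x + c * v)
    (hz : 0 < z.im) : (x : ℂ) + z * v ∈ upperUnionIci a := by
  rcases hv.eq_or_lt with rfl | hv
  · exact Or.inr (by simpa using hx)
  · exact Or.inl (by simpa using mul_pos hz hv)

end UpperUnionIci

/-- The point `a` lies above the roots of `P`: `P` vanishes nowhere on the product of the sets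
`ℍ ∪ [a i, ∞)`. This merges real stability with the usual condition on real points, so that it
is a single property preserved by the operators `1 - ∂ᵢ`. -/
def AboveRoots {σ : Type*} (P : MvPolynomial σ ℝ) (a : σ → ℝ) : Prop :=
  ∀ z : σ → ℂ, (∀ i, z i ∈ upperUnionIci (a i)) → MvPolynomial.aeval z P ≠ 0

/-- The barrier function `∂ᵢ P / P` of `P` in direction `i`. -/
noncomputable def barrier {σ : Type*} (P : MvPolynomial σ ℝ) (i : σ) (x : σ → ℝ) : ℝ :=
  MvPolynomial.eval x (MvPolynomial.pderiv i P) / MvPolynomial.eval x P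

section Barrier

variable {σ : Type*} {P : MvPolynomial σ ℝ}

theorem barrier_add_smul (P : MvPolynomial σ ℝ) (i : σ) (x v : σ → ℝ) (t : ℝ) :
    barrier P i (x + t • v) =
      (restrictLine (MvPolynomial.pderiv i P) x v).eval t / (restrictLine P x v).eval t := by
  rw [eval_restrictLine, eval_restrictLine, barrier]

theorem barrier_pow (P : MvPolynomial σ ℝ) (i : σ) {x : σ → ℝ} (hx : MvPolynomial.eval x P ≠ 0)
    (r : ℕ) : barrier (P ^ r) i x = r * barrier P i x := by
  cases r with
  | zero => simp [barrier]
  | succ r =>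
    simp only [barrier, Derivation.leibniz_pow, map_mul, map_pow, map_natCast, smul_eq_mul,
      nsmul_eq_mul, Nat.add_sub_cancel]
    field_simp
    ring

theorem barrier_sub_pderiv [DecidableEq σ] {i j : σ} {x : σ → ℝ} {t d : ℝ}
    (hP : MvPolynomial.eval (x + t • Pi.single i 1) P ≠ 0)
    (hi : barrier P i (x + t • Pi.single i 1) ≠ 1)
    (hd : HasDerivAt (fun s : ℝ => barrier P j (x + s • Pi.single i 1)) d t) :
    barrier (P - MvPolynomial.pderiv i P) j (x + t • Pi.single i 1) =
      barrier P j (x + t • Pi.single i 1) - d / (1 - barrier P i (x + t • Pi.single i 1)) := by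
  have hquot := ((restrictLine (MvPolynomial.pderiv j P) x (Pi.single i 1)).hasDerivAt t).fun_div
    ((restrictLine P x (Pi.single i 1)).hasDerivAt t) (by rwa [eval_restrictLine])
  simp only [← barrier_add_smul, derivative_restrictLine_single] at hquot
  rw [hd.unique hquot]
  simp only [eval_restrictLine, barrier, map_sub, pderiv_comm j i] at hP hi ⊢
  set b := x + t • Pi.single i 1
  have hsub : MvPolynomial.eval b P - MvPolynomial.eval b (MvPolynomial.pderiv i P) ≠ 0 :=
    fun h => hi (by rw [← sub_eq_zero.1 h, div_self hP])
  have hone_sub : 1 - MvPolynomial.eval b (MvPolynomial.pderiv i P) / MvPolynomial.eval b P =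
      (MvPolynomial.eval b P - MvPolynomial.eval b (MvPolynomial.pderiv i P)) /
        MvPolynomial.eval b P := by
    rw [sub_div, div_self hP]
  rw [hone_sub]
  field_simp
  ring

end Barrier

namespace AboveRoots

variable {σ : Type*} {P : MvPolynomial σ ℝ} {a : σ → ℝ}

theorem mono (hP : AboveRoots P a) {b : σ → ℝ} (hab : a ≤ b) : AboveRoots P b :=
  fun z hz => hP z fun i => upperUnionIci_antitone (hab i) (hz i)

theorem pow (hP : AboveRoots P a) (r : ℕ) : AboveRoots (P ^ r) a :=
  fun z hz => map_pow (MvPolynomial.aeval z) P r ▸ pow_ne_zero r (hP z hz)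

theorem eval_ne_zero (hP : AboveRoots P a) {x : σ → ℝ} (hx : a ≤ x) :
    MvPolynomial.eval x P ≠ 0 := by
  have hPx := hP (fun i => x i) fun i => ofReal_mem_upperUnionIci (hx i)
  rwa [mvAeval_ofReal, Complex.ofReal_ne_zero] at hPx

theorem im_pderiv_div_nonpos (hP : AboveRoots P a) (i : σ) {z : σ → ℂ}
    (hz : ∀ i, z i ∈ upperUnionIci (a i)) :
    (MvPolynomial.aeval z (MvPolynomial.pderiv i P) / MvPolynomial.aeval z P).im ≤ 0 := by
  classical
  set q := restrictLine (MvPolynomial.map (algebraMap ℝ ℂ) P) z (Pi.single i 1) with hq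
  have hq_eval (t : ℂ) : q.eval t = MvPolynomial.aeval (z + t • Pi.single i 1) P := by
    rw [hq, eval_restrictLine, MvPolynomial.eval_map, MvPolynomial.aeval_def]
  have hq_deriv : q.derivative.eval 0 = MvPolynomial.aeval z (MvPolynomial.pderiv i P) := by
    rw [hq, derivative_restrictLine_single, eval_restrictLine, MvPolynomial.pderiv_map,
      MvPolynomial.eval_map, MvPolynomial.aeval_def, zero_smul, add_zero]
  have hq_zero : q.eval 0 = MvPolynomial.aeval z P := by rw [hq_eval, zero_smul, add_zero]
  rw [← hq_deriv, ← hq_zero]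
  refine im_eval_derivative_div_eval_nonpos (hq_zero ▸ hP z hz) fun ζ hζ => ?_
  by_contra! hpos
  refine hP (z + ζ • Pi.single i 1) (fun j => ?_) (hq_eval ζ ▸ hζ)
  obtain rfl | hji := eq_or_ne j i
  · left
    simpa using add_pos_of_nonneg_of_pos (im_nonneg_of_mem_upperUnionIci (hz j)) hpos
  · simpa [hji] using hz j

theorem barrier_nonneg (hP : AboveRoots P a) (i : σ) : 0 ≤ barrier P i a := by
  classical
  have hline := eval_derivative_div_eval_nonneg (q := restrictLine P a (Pi.single i 1)) (t := 0)
    (fun z hz => ?_) fun s hs => ?_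
  · rwa [derivative_restrictLine_single, ← barrier_add_smul, zero_smul, add_zero] at hline
  · rw [aeval_restrictLine]
    refine hP _ fun j => ofReal_add_mul_ofReal_mem_upperUnionIci (c := 0) ?_ (by simp) hz
    exact (Pi.single_nonneg.2 zero_le_one : (0 : σ → ℝ) ≤ Pi.single i 1) j
  · rw [eval_restrictLine]
    exact hP.eval_ne_zero
      (le_add_of_nonneg_right (smul_nonneg hs (Pi.single_nonneg.2 zero_le_one)))

theorem isStieltjes_restrictLine (hP : AboveRoots P a) (i : σ) {x v : σ → ℝ} {c : ℝ} (hv : 0 ≤ v)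
    (hx : a ≤ x + c • v) :
    IsStieltjes (restrictLine (MvPolynomial.pderiv i P) x v) (restrictLine P x v) c := by
  have hmem (z : ℂ) (hz : 0 < z.im) (j : σ) : (x j : ℂ) + z * v j ∈ upperUnionIci (a j) :=
    ofReal_add_mul_ofReal_mem_upperUnionIci (hv j) (hx j) hz
  have hle (t : ℝ) (ht : c ≤ t) : a ≤ x + t • v :=
    hx.trans (add_le_add_right (smul_le_smul_of_nonneg_right ht hv) x)
  refine ⟨fun z hz => ?_, fun t ht => ?_, fun z hz => ?_, fun t ht => ?_⟩
  · rw [aeval_restrictLine]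
    exact hP _ (hmem z hz)
  · rw [eval_restrictLine]
    exact hP.eval_ne_zero (hle t ht)
  · rw [aeval_restrictLine, aeval_restrictLine]
    exact hP.im_pderiv_div_nonpos i (hmem z hz)
  · rw [← barrier_add_smul]
    exact (hP.mono (hle t ht)).barrier_nonneg i

theorem antitoneOn_barrier (hP : AboveRoots P a) (i : σ) : AntitoneOn (barrier P i) (Ici a) := by
  intro x hx y _ hxy
  have hline := hP.isStieltjes_restrictLine i (x := x) (c := 0) (sub_nonneg.2 hxy)
    (by simpa using hx)
  simpa [eval_restrictLine, barrier] using
    hline.antitoneOn self_mem_Ici (mem_Ici.2 zero_le_one) zero_le_one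

theorem sub_pderiv [Finite σ] (hP : AboveRoots P a) {i : σ} (hi : barrier P i a < 1) :
    AboveRoots (P - MvPolynomial.pderiv i P) a := by
  intro z hz hzero
  have hPz := hP z hz
  have hone : MvPolynomial.aeval z (MvPolynomial.pderiv i P) / MvPolynomial.aeval z P = 1 := by
    rw [map_sub, sub_eq_zero] at hzero
    rw [← hzero, div_self hPz]
  set x : σ → ℝ := fun j => (z j).re
  set v : σ → ℝ := fun j => (z j).im
  have hv : 0 ≤ v := fun j => im_nonneg_of_mem_upperUnionIci (hz j)
  obtain ⟨c, hc⟩ : ∃ c : ℝ, a ≤ x + c • v := by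
    obtain ⟨c, hc⟩ := (Set.finite_range fun j => (a j - x j) / v j).bddAbove
    refine ⟨c, fun j => ?_⟩
    obtain hpos | ⟨hvj, hxj⟩ := hz j
    · have hcj := (div_le_iff₀ hpos).1 (hc ⟨j, rfl⟩)
      exact sub_le_iff_le_add'.1 hcj
    · simpa [v, x, hvj] using hxj
  have hline := hP.isStieltjes_restrictLine i hv hc
  have haeval_I (Q : MvPolynomial σ ℝ) :
      aeval Complex.I (restrictLine Q x v) = MvPolynomial.aeval z Q := by
    rw [aeval_restrictLine]
    congr 2
    funext j
    apply Complex.ext <;> simp [x, v]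
  have hbarrier := hline.eval_div_eval_eq_of_im_eq_zero (z := Complex.I) (by simp)
    (by rw [haeval_I, haeval_I, hone, Complex.one_im]) le_rfl
  rw [haeval_I, haeval_I, hone, ← barrier_add_smul, Complex.ofReal_eq_one] at hbarrier
  exact hi.not_ge (hbarrier ▸ hP.antitoneOn_barrier i self_mem_Ici hc hc)

theorem barrier_sub_pderiv_le [DecidableEq σ] (hP : AboveRoots P a) {i : σ} {δ : ℝ} (hδ : 0 < δ)
    (hi : barrier P i a ≤ 1 - 1 / δ) (j : σ) :
    barrier (P - MvPolynomial.pderiv i P) j (a + δ • Pi.single i 1) ≤ barrier P j a := by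
  have hline := hP.isStieltjes_restrictLine j (x := a) (v := Pi.single i 1) (c := 0)
    (Pi.single_nonneg.2 zero_le_one) (by simp)
  set f : ℝ → ℝ := fun t => barrier P j (a + t • Pi.single i 1) with hf
  have hanti : AntitoneOn f (Ici 0) := by
    simpa only [hf, barrier_add_smul] using hline.antitoneOn
  have hconv : ConvexOn ℝ (Ici 0) f := by simpa only [hf, barrier_add_smul] using hline.convexOn
  have hdiff : DifferentiableAt ℝ f δ := by
    simp only [hf, barrier_add_smul]
    exact (Polynomial.differentiableAt _).fun_div (Polynomial.differentiableAt _)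
      (hline.eval_ne_zero δ hδ.le)
  have hle : a ≤ a + δ • Pi.single i 1 :=
    le_add_of_nonneg_right (smul_nonneg hδ.le (Pi.single_nonneg.2 zero_le_one))
  have hderiv_nonpos : deriv f δ ≤ 0 :=
    derivWithin_of_mem_nhds (f := f) (Ici_mem_nhds hδ) ▸ hanti.derivWithin_nonpos
  have htangent : f δ - f 0 ≤ δ * deriv f δ := by
    have hslope := hconv.slope_le_deriv self_mem_Ici (mem_Ici.2 hδ.le) hδ hdiff
    rwa [slope_def_field, sub_zero, div_le_iff₀' hδ] at hslope
  have hgap : 1 / δ ≤ 1 - barrier P i (a + δ • Pi.single i 1) := by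
    linarith [hP.antitoneOn_barrier i self_mem_Ici hle hle]
  have hgap_pos : 0 < 1 - barrier P i (a + δ • Pi.single i 1) := (one_div_pos.2 hδ).trans_le hgap
  calc barrier (P - MvPolynomial.pderiv i P) j (a + δ • Pi.single i 1)
      = f δ - deriv f δ / (1 - barrier P i (a + δ • Pi.single i 1)) :=
        barrier_sub_pderiv (hP.eval_ne_zero hle) (sub_pos.1 hgap_pos).ne hdiff.hasDerivAt
    _ ≤ f δ - δ * deriv f δ := by
        have hgap_mul := (div_le_iff₀' hδ).1 hgap
        have hδ_deriv := (le_div_iff₀ hgap_pos).2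
          (by nlinarith : δ * deriv f δ * (1 - barrier P i (a + δ • Pi.single i 1)) ≤ deriv f δ)
        linarith
    _ ≤ f 0 := by linarith
    _ = barrier P j a := by simp [hf]

theorem foldr_sub_pderiv [Finite σ] [DecidableEq σ] (hP : AboveRoots P a) {δ φ : ℝ} (hδ : 0 < δ)
    (hφ : φ ≤ 1 - 1 / δ) (hbarrier : ∀ j, barrier P j a ≤ φ) (l : List σ) :
    AboveRoots (l.foldr (fun i Q => Q - MvPolynomial.pderiv i Q) P)
        (a + (l.map fun i => δ • Pi.single i 1).sum) ∧
      ∀ j, barrier (l.foldr (fun i Q => Q - MvPolynomial.pderiv i Q) P) j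
        (a + (l.map fun i => δ • Pi.single i 1).sum) ≤ φ := by
  induction l with
  | nil => simpa using ⟨hP, hbarrier⟩
  | cons i l ih =>
    obtain ⟨habove, hle⟩ := ih
    have hφ_lt : φ < 1 := hφ.trans_lt (sub_lt_self 1 (one_div_pos.2 hδ))
    rw [List.foldr_cons, List.map_cons, List.sum_cons, add_comm (δ • _), ← add_assoc]
    refine ⟨(habove.sub_pderiv ((hle i).trans_lt hφ_lt)).mono ?_, fun j => ?_⟩
    · exact le_add_of_nonneg_right (smul_nonneg hδ.le (Pi.single_nonneg.2 zero_le_one))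
    · exact (habove.barrier_sub_pderiv_le hδ ((hle i).trans hφ) j).trans (hle j)

end AboveRoots

section Determinant

open Matrix

theorem sum_mul_ofReal_ne_zero {ι : Type*} [Fintype ι] {z : ι → ℂ} {t : ℝ} (ht : 0 < t)
    (hz : ∀ i, z i ∈ upperUnionIci t) {β : ι → ℝ} (hβ : 0 ≤ β) (hβ_ne : β ≠ 0) :
    ∑ i, z i * β i ≠ 0 := by
  intro hzero
  have him_sum : ∑ i, (z i).im * β i = 0 := by simpa using congrArg Complex.im hzero
  have hre_sum : ∑ i, (z i).re * β i = 0 := by simpa using congrArg Complex.re hzero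
  have him_zero : ∀ i, (z i).im * β i = 0 := by
    simpa using (Finset.sum_eq_zero_iff_of_nonneg fun i _ =>
      mul_nonneg (im_nonneg_of_mem_upperUnionIci (hz i)) (hβ i)).1 him_sum
  have hzero_or (i : ι) : β i = 0 ∨ 0 < (z i).re :=
    (hz i).imp (fun him => (mul_eq_zero.1 (him_zero i)).resolve_left him.ne')
      fun hre => ht.trans_le hre.2
  have hre_nonneg (i : ι) : 0 ≤ (z i).re * β i :=
    (hzero_or i).elim (fun h => by simp [h]) fun h => mul_nonneg h.le (hβ i)
  have hre_zero : ∀ i, (z i).re * β i = 0 := by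
    simpa using (Finset.sum_eq_zero_iff_of_nonneg fun i _ => hre_nonneg i).1 hre_sum
  exact hβ_ne (funext fun i =>
    (hzero_or i).elim id fun h => (mul_eq_zero.1 (hre_zero i)).resolve_left h.ne')

theorem det_sum_smul_ne_zero {ι k : Type*} [Fintype ι] [Fintype k] [DecidableEq k]
    {A : ι → Matrix k k ℂ} (hA : ∀ i, (A i).PosSemidef) (hsum : (∑ i, A i).PosDef) {t : ℝ}
    (ht : 0 < t) {z : ι → ℂ} (hz : ∀ i, z i ∈ upperUnionIci t) : (∑ i, z i • A i).det ≠ 0 := by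
  intro hdet
  obtain ⟨v, hv, hzero⟩ := exists_mulVec_eq_zero_iff.2 hdet
  choose β hβ_nonneg hβ using fun i =>
    RCLike.nonneg_iff_exists_ofReal.1 ((hA i).dotProduct_mulVec_nonneg v)
  have hform (w : ι → ℂ) : star v ⬝ᵥ ((∑ i, w i • A i) *ᵥ v) = ∑ i, w i * β i := by
    rw [sum_mulVec, dotProduct_sum]
    refine Finset.sum_congr rfl fun i _ => ?_
    rw [smul_mulVec, dotProduct_smul, ← hβ i, smul_eq_mul]
    rfl
  refine sum_mul_ofReal_ne_zero ht hz hβ_nonneg (fun hβ_zero => ?_)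
    (by rw [← hform, hzero, dotProduct_zero])
  have hpos := hsum.dotProduct_mulVec_pos hv
  have hform_one := hform 1
  simp only [Pi.one_apply, one_smul, hβ_zero, Pi.zero_apply, Complex.ofReal_zero, mul_zero,
    Finset.sum_const_zero] at hform_one
  exact hpos.ne' hform_one

theorem derivative_eval_zero_det_smul_one_add_smul {k K : Type*} [Fintype k] [DecidableEq k]
    [Field K] (M : Matrix k k K) {t : K} (ht : t ≠ 0) :
    ((C t • (1 : Matrix k k K[X]) + (X : K[X]) • M.map C).det).derivative.eval 0 =
      t ^ Fintype.card k * (t⁻¹ * M.trace) := by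
  have hscale : C t • (1 : Matrix k k K[X]) + (X : K[X]) • M.map C =
      C t • (1 + (X : K[X]) • (t⁻¹ • M).map C) := by
    have hmul : (C t : K[X]) * C t⁻¹ = 1 := by rw [← C_mul, mul_inv_cancel₀ ht, C_1]
    rw [smul_add]
    congr 1
    refine Matrix.ext fun a b => ?_
    simp only [Matrix.smul_apply, Matrix.map_apply, smul_eq_mul, C_mul]
    linear_combination (-(X : K[X]) * C (M a b)) * hmul
  rw [hscale, det_smul, ← C_pow, derivative_C_mul, eval_C_mul, derivative_det_one_add_X_smul,
    trace_smul, smul_eq_mul]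

variable {m n : ℕ} {A : Fin m → Matrix (Fin n) (Fin n) ℂ}

theorem map_det_mixedMat {R : Type*} [CommRing R] (f : MvPolynomial (Fin m) ℂ →+* R)
    (A : Fin m → Matrix (Fin n) (Fin n) ℂ) : f (mixedMat A).det =
      (∑ i, f (MvPolynomial.X i) • (A i).map fun c => f (MvPolynomial.C c)).det := by
  rw [RingHom.map_det, mixedMat, map_sum]
  congr 1
  refine Finset.sum_congr rfl fun i _ => ?_
  ext a b
  simp

theorem eval_det_mixedMat (A : Fin m → Matrix (Fin n) (Fin n) ℂ) (z : Fin m → ℂ) :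
    MvPolynomial.eval z (mixedMat A).det = (∑ i, z i • A i).det := by
  rw [map_det_mixedMat]
  simp

theorem restrictLine_det_mixedMat (A : Fin m → Matrix (Fin n) (Fin n) ℂ) (x v : Fin m → ℂ) :
    restrictLine (mixedMat A).det x v = (∑ i, (C (x i) + C (v i) * X) • (A i).map C).det := by
  have hmap := map_det_mixedMat
    (MvPolynomial.aeval (R := ℂ) fun j => C (x j) + C (v j) * X).toRingHom A
  simp only [AlgHom.toRingHom_eq_coe, RingHom.coe_coe, MvPolynomial.aeval_X,
    MvPolynomial.algHom_C] at hmap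
  exact hmap

theorem eval_pderiv_det_mixedMat (hsum : ∑ i, A i = 1) {t : ℂ} (ht : t ≠ 0) (j : Fin m) :
    MvPolynomial.eval (fun _ => t) (MvPolynomial.pderiv j (mixedMat A).det) =
      t ^ n * (t⁻¹ * (A j).trace) := by
  have hsum_C : ∑ i, (A i).map C = (1 : Matrix (Fin n) (Fin n) ℂ[X]) := by
    simpa only [map_sum, map_one, RingHom.mapMatrix_apply] using
      congrArg (C : ℂ →+* ℂ[X]).mapMatrix hsum
  have hline : restrictLine (mixedMat A).det (fun _ => t) (Pi.single j 1) =
      (C t • (1 : Matrix (Fin n) (Fin n) ℂ[X]) + (X : ℂ[X]) • (A j).map C).det := by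
    rw [restrictLine_det_mixedMat]
    congr 1
    simp only [add_smul, Finset.sum_add_distrib, ← Finset.smul_sum, hsum_C]
    rw [Finset.sum_eq_single j (fun i _ hi => by simp [hi]) (by simp)]
    simp
  have hderiv := eval_restrictLine (MvPolynomial.pderiv j (mixedMat A).det) (fun _ => t)
    (Pi.single j 1) 0
  rw [zero_smul, add_zero] at hderiv
  rw [← hderiv, ← derivative_restrictLine_single, hline,
    derivative_eval_zero_det_smul_one_add_smul _ ht, Fintype.card_fin]

theorem map_conj_det_mixedMat (hA : ∀ i, (A i).IsHermitian) :
    MvPolynomial.map (starRingEnd ℂ) (mixedMat A).det = (mixedMat A).det := by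
  rw [map_det_mixedMat, ← det_transpose (mixedMat A)]
  refine congrArg det (Matrix.ext fun a b => ?_)
  simp only [mixedMat, Matrix.sum_apply, transpose_apply, Matrix.smul_apply, Matrix.map_apply,
    MvPolynomial.map_X, MvPolynomial.map_C]
  refine Finset.sum_congr rfl fun i _ => ?_
  rw [← (hA i).apply b a, starRingEnd_apply]

theorem exists_map_ofReal_eq_det_mixedMat (hA : ∀ i, (A i).IsHermitian) :
    ∃ D : MvPolynomial (Fin m) ℝ, MvPolynomial.map (algebraMap ℝ ℂ) D = (mixedMat A).det := by
  refine MvPolynomial.mem_range_map_iff_coeffs_subset.2 fun c hc => ?_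
  obtain ⟨k, -, rfl⟩ := MvPolynomial.mem_coeffs_iff.1 hc
  have hconj := congrArg (MvPolynomial.coeff k) (map_conj_det_mixedMat hA)
  rw [MvPolynomial.coeff_map] at hconj
  exact ⟨_, Complex.conj_eq_iff_re.1 hconj⟩

theorem mixedCharMv_eq_map {D : MvPolynomial (Fin m) ℝ}
    (hD : MvPolynomial.map (algebraMap ℝ ℂ) D = (mixedMat A).det) (r : ℕ) :
    mixedCharMv A r = MvPolynomial.map (algebraMap ℝ ℂ)
      ((List.finRange m).foldr (fun i Q => Q - MvPolynomial.pderiv i Q) (D ^ r)) := by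
  rw [mixedCharMv]
  induction List.finRange m with
  | nil => simp [hD]
  | cons i l ih => rw [List.foldr_cons, List.foldr_cons, ih, map_sub, MvPolynomial.pderiv_map]

theorem aboveRoots_of_map_eq_det_mixedMat (hA : ∀ i, (A i).PosSemidef) (hsum : (∑ i, A i).PosDef)
    {D : MvPolynomial (Fin m) ℝ} (hD : MvPolynomial.map (algebraMap ℝ ℂ) D = (mixedMat A).det)
    {t : ℝ} (ht : 0 < t) : AboveRoots D fun _ => t := by
  intro z hz
  rw [MvPolynomial.aeval_def, ← MvPolynomial.eval_map, hD, eval_det_mixedMat]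
  exact det_sum_smul_ne_zero hA hsum ht hz

theorem barrier_of_map_eq_det_mixedMat (hsum : ∑ i, A i = 1) {D : MvPolynomial (Fin m) ℝ}
    (hD : MvPolynomial.map (algebraMap ℝ ℂ) D = (mixedMat A).det) {t : ℝ} (ht : t ≠ 0)
    (j : Fin m) : barrier D j (fun _ => t) = (A j).trace.re / t := by
  have ht' : (t : ℂ) ≠ 0 := Complex.ofReal_ne_zero.2 ht
  have heval : (MvPolynomial.eval (fun _ => t) D : ℂ) = t ^ n := by
    rw [ofReal_eval_eq_eval_map, hD, eval_det_mixedMat, ← Finset.smul_sum, hsum, det_smul, det_one,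
      Fintype.card_fin, mul_one]
  have hpderiv : (MvPolynomial.eval (fun _ => t) (MvPolynomial.pderiv j D) : ℂ) =
      t ^ n * ((t : ℂ)⁻¹ * (A j).trace) := by
    rw [ofReal_eval_eq_eval_map, ← MvPolynomial.pderiv_map, hD, eval_pderiv_det_mixedMat hsum ht']
  have hquot : (barrier D j (fun _ => t) : ℂ) = (A j).trace / t := by
    rw [barrier, Complex.ofReal_div, heval, hpderiv]
    field_simp
  rw [← Complex.div_ofReal_re, ← hquot, Complex.ofReal_re]

end Determinant

theorem eval_mixedCharMv_ne_zero {m n : ℕ} {A : Fin m → Matrix (Fin n) (Fin n) ℂ}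
    (hA : ∀ i, (A i).PosSemidef) (hsum : ∑ i, A i = 1) {ε : ℝ}
    (htr : ∀ i, (A i).trace.re ≤ ε) (r : ℕ) {t δ x : ℝ} (ht : 0 < t) (hδ : 0 < δ)
    (hδt : r * ε / t ≤ 1 - 1 / δ) (hx : t + δ ≤ x) :
    MvPolynomial.eval (fun _ => (x : ℂ)) (mixedCharMv A r) ≠ 0 := by
  obtain ⟨D, hD⟩ := exists_map_ofReal_eq_det_mixedMat fun i => (hA i).isHermitian
  have habove : AboveRoots D fun _ => t :=
    aboveRoots_of_map_eq_det_mixedMat hA (hsum ▸ Matrix.PosDef.one) hD ht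
  have hbarrier (j : Fin m) : barrier (D ^ r) j (fun _ => t) ≤ r * ε / t := by
    rw [barrier_pow D j (habove.eval_ne_zero le_rfl),
      barrier_of_map_eq_det_mixedMat hsum hD ht.ne', ← mul_div_assoc]
    gcongr
    exact htr j
  have hshift : ((List.finRange m).map fun i => δ • (Pi.single i 1 : Fin m → ℝ)).sum =
      fun _ => δ := by
    rw [← List.ofFn_eq_map, List.sum_ofFn]
    exact funext fun k => by simp [Finset.sum_apply, ← Finset.mul_sum]
  have hfinal := ((habove.pow r).foldr_sub_pderiv hδ hδt hbarrier (List.finRange m)).1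
  rw [hshift] at hfinal
  rw [mixedCharMv_eq_map hD, ← ofReal_eval_eq_eval_map _ fun _ => x]
  exact Complex.ofReal_ne_zero.2 (hfinal.eval_ne_zero fun _ => hx)

theorem one_sub_one_div_sqrt_sq_le_one {s : ℝ} (hs : 1 ≤ s) : (1 - 1 / Real.sqrt s) ^ 2 ≤ 1 := by
  have hinv_le : 1 / Real.sqrt s ≤ 1 :=
    div_le_one_of_le₀ (Real.one_le_sqrt.2 hs) (Real.sqrt_nonneg s)
  exact pow_le_one₀ (sub_nonneg.2 hinv_le) (sub_le_self 1 (by positivity))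

theorem sqrt_mul_le_sqrt_two_mul_mul_rpow {s ε : ℝ} (hs : 0 ≤ s) (hε0 : 0 < ε) (hε1 : ε ≤ 1) :
    Real.sqrt (s * ε) ≤ Real.sqrt (2 * s) * ε ^ ((1 : ℝ) / 4) := by
  have hrpow : Real.sqrt ε ≤ ε ^ ((1 : ℝ) / 4) := by
    rw [Real.sqrt_eq_rpow]
    exact Real.rpow_le_rpow_of_exponent_ge hε0 hε1 (by norm_num)
  rw [Real.sqrt_mul hs]
  gcongr
  linarith

theorem mixed_char_poly_power_root_bound_general {m n r : ℕ} (hr : 0 < r)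
    (A : Fin m → Matrix (Fin n) (Fin n) ℂ) (hA : ∀ i, (A i).PosSemidef) (hsum : ∑ i, A i = 1)
    (ε : ℝ) (hε0 : 0 < ε) (htr : ∀ i, (A i).trace.re ≤ ε) (x : ℝ)
    (hx : (1 + Real.sqrt (r * ε)) ^ 2 ≤ x) :
    MvPolynomial.eval (fun _ => (x : ℂ)) (mixedCharMv A r) ≠ 0 := by
  have hpos : 0 < Real.sqrt (r * ε) := Real.sqrt_pos.2 (by positivity)
  have hsq : Real.sqrt (r * ε) ^ 2 = r * ε := Real.sq_sqrt (by positivity)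
  set u := Real.sqrt (r * ε)
  -- The choice `t = u + u²`, `δ = 1 + u` minimises `t + δ` subject to `u² / t ≤ 1 - 1 / δ`.
  refine eval_mixedCharMv_ne_zero hA hsum htr r (t := u + u ^ 2) (δ := 1 + u) (by positivity)
    (by positivity) (le_of_eq ?_) (by linarith)
  rw [← hsq]
  field_simp
  ring

/-- **Root bound for mixed characteristic polynomials with repetition.** If
`A₁ + ⋯ + A_m = I`, each `Aᵢ` is PSD with trace at most `ε ≤ (1-1/√r)²`, then the
univariate polynomial `[∏ᵢ(1-∂ᵢ)] det(z₁A₁+⋯+z_mA_m)^r |_{z=x}` does not vanish for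
real `x ≥ (1+√(2r)·ε^{1/4})²`. -/
theorem mixed_char_poly_power_root_bound {m n r : ℕ} (hr : 2 ≤ r) (hm : 1 ≤ m)
    (hn : 1 ≤ n) (A : Fin m → Matrix (Fin n) (Fin n) ℂ)
    (hA : ∀ i, (A i).PosSemidef) (hsum : ∑ i, A i = 1)
    (ε : ℝ) (hε0 : 0 < ε) (hε1 : ε ≤ (1 - 1 / Real.sqrt r) ^ 2)
    (htr : ∀ i, ((A i).trace).re ≤ ε) :
    (∀ x : ℝ, (1 + Real.sqrt (2 * r) * ε ^ ((1 : ℝ) / 4)) ^ 2 ≤ x →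
      MvPolynomial.eval (fun _ => (x : ℂ)) (mixedCharMv A r) ≠ 0) ∧
    (∀ x : ℝ, MvPolynomial.eval (fun _ => (x : ℂ)) (mixedCharMv A r) = 0 →
      x < (1 + Real.sqrt (2 * r) * ε ^ ((1 : ℝ) / 4)) ^ 2) := by
  have hε_le : ε ≤ 1 :=
    hε1.trans (one_sub_one_div_sqrt_sq_le_one (Nat.one_le_cast.2 (one_le_two.trans hr)))
  have hsqrt := sqrt_mul_le_sqrt_two_mul_mul_rpow r.cast_nonneg hε0 hε_le
  have hne (x : ℝ) (hx : (1 + Real.sqrt (2 * r) * ε ^ ((1 : ℝ) / 4)) ^ 2 ≤ x) :=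
    mixed_char_poly_power_root_bound_general (two_pos.trans_le hr) A hA hsum ε hε0 htr x
      ((by gcongr : (1 + Real.sqrt (r * ε)) ^ 2 ≤ _).trans hx)
  exact ⟨hne, fun x hzero => not_le.1 fun hx => hne x hx hzero⟩
end
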